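/- Let (R, m) be a Noetherian local ring of dimension t and let x = x_1, ..., x_t be any system of parameters of R. Then R is unmixed if and only if the m-adic topology is equivalent to the topology defined by the family of ideals {(x_1^n, ..., x_t^n)^lim}_{n ≥ 1}; that is, R is unmixed if and only if for every positive integer k there exists n with (x_1^n, ..., x_t^n)^lim ⊆ m^k. -/

import Mathlib

/-!
By faithful flatness of the completion we may replace `R` by the complete ring `A = R̂`. The ideal
`Jₙ = (x₁ⁿ, …, x_tⁿ)^lim` is the kernel of `A → H^t_m(A)`, `a ↦ a / (x₁ ⋯ x_t)ⁿ`, so `⋂ Jₙ` is the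
annihilator of `H^t_m(A)`, and by Chevalley's theorem the `Jₙ` define the `m`-adic topology if and
only if this annihilator vanishes.

If `P = ann c` is an associated prime with `dim A/P < t`, then multiplication by `c` factors through
`A/P`, and `H^t_m(A/P) = 0` by Grothendieck's vanishing theorem, so `c` annihilates `H^t_m(A)`.

Conversely let `dim A/P = t` for all associated primes `P`. If the annihilator is nonzero, it
contains some `c` for which `P = ann c` is prime. Then the map `H^t_m(A/P) → H^t_m(A)` induced by
`c : A/P ↪ A` vanishes, so the connecting map onto `H^t_m(A/P)` is surjective. Its source is the
`m`-torsion of the top local cohomology of `A/cA` along the first `t - 1` parameters. As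
`H^t_m(A/P) ≠ 0`, the prime `P` is associated to the Matlis dual of that torsion. For generic
parameters this dual is finitely generated, and `m` is the only prime in its support that contains
the first `t - 1` parameters. Hence `dim A/P ≤ t - 1`, a contradiction.
-/

open IsLocalRing

/-- The limit closure `(x)^lim = ⋃_{n>0} ((x₁^{n+1}, …, x_r^{n+1}) :_R (x₁⋯x_r)^n)` of a
sequence `x = x₁, …, x_r` of elements of `R`; the union of the increasing family of ideals
is expressed as a supremum. -/
def limitClosure {R : Type*} [CommRing R] {M : Type*} [AddCommGroup M] [Module R M]
    {r : ℕ} (x : Fin r → R) : Submodule R M :=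
  ⨆ n : ℕ, (Ideal.span (Set.range fun i => x i ^ (n + 2)) • (⊤ : Submodule R M)).comap
    (LinearMap.lsmul R M ((∏ i, x i) ^ (n + 1)))

/-- A system of parameters of a Noetherian local ring `R` of dimension `t`: a sequence of `t`
elements of the maximal ideal generating an ideal primary to the maximal ideal. -/
def IsSOP (R : Type*) [CommRing R] [IsLocalRing R] {t : ℕ} (x : Fin t → R) : Prop :=
  (∀ i, x i ∈ maximalIdeal R) ∧ (Ideal.span (Set.range x)).radical = maximalIdeal R

/-- A Noetherian local ring `(R, m)` is unmixed if `dim R̂/P = dim R̂` for every associated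
prime `P` of the `m`-adic completion `R̂` of `R`. -/
def IsUnmixedLocalRing (R : Type*) [CommRing R] [IsLocalRing R] : Prop :=
  ∀ P ∈ associatedPrimes (AdicCompletion (maximalIdeal R) R)
      (AdicCompletion (maximalIdeal R) R),
    ringKrullDim ((AdicCompletion (maximalIdeal R) R) ⧸ P) =
      ringKrullDim (AdicCompletion (maximalIdeal R) R)

universe u v

section PowerTorsion

variable {A : Type*} [CommRing A] {M N : Type*} [AddCommGroup M] [Module A M] [AddCommGroup N]
  [Module A N] {I J : Ideal A}

/-- The `I`-power torsion `Γ_I(M)`: the elements on which every element of `I` acts nilpotently.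
For finitely generated `I` these are the elements killed by a power of `I`. -/
def powerTorsion (I : Ideal A) (M : Type*) [AddCommGroup M] [Module A M] : Submodule A M where
  carrier := {u | I ≤ (Ideal.torsionOf A M u).radical}
  zero_mem' := by simp [Ideal.radical_top]
  add_mem' {u v} hu hv := by
    have h : Ideal.torsionOf A M u ⊓ Ideal.torsionOf A M v ≤ Ideal.torsionOf A M (u + v) :=
      fun a ha => by
        rw [Ideal.mem_inf, Ideal.mem_torsionOf_iff, Ideal.mem_torsionOf_iff] at ha
        rw [Ideal.mem_torsionOf_iff, smul_add, ha.1, ha.2, add_zero]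
    exact ((le_inf hu hv).trans_eq (Ideal.radical_inf _ _).symm).trans (Ideal.radical_mono h)
  smul_mem' c u hu := hu.trans <| Ideal.radical_mono fun a ha => by
    rw [Ideal.mem_torsionOf_iff] at ha ⊢
    rw [smul_comm, ha, smul_zero]

lemma mem_powerTorsion {u : M} :
    u ∈ powerTorsion I M ↔ I ≤ (Ideal.torsionOf A M u).radical := Iff.rfl

lemma exists_pow_smul_eq_zero {u : M} (hu : u ∈ powerTorsion I M) {a : A} (ha : a ∈ I) :
    ∃ k, a ^ k • u = 0 := by
  simpa only [Ideal.mem_radical_iff, Ideal.mem_torsionOf_iff] using hu ha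

lemma mem_powerTorsion_span_singleton {a : A} {u : M} :
    u ∈ powerTorsion (Ideal.span {a}) M ↔ ∃ k, a ^ k • u = 0 := by
  rw [mem_powerTorsion, Ideal.span_singleton_le_iff_mem, Ideal.mem_radical_iff]
  simp only [Ideal.mem_torsionOf_iff]

lemma powerTorsion_anti (h : I ≤ J.radical) : powerTorsion J M ≤ powerTorsion I M :=
  fun _ hu => h.trans (Ideal.radical_le_radical_iff.2 hu)

lemma powerTorsion_sup : powerTorsion (I ⊔ J) M = powerTorsion I M ⊓ powerTorsion J M := by
  ext u
  exact sup_le_iff (a := I) (b := J)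

lemma map_mem_powerTorsion (f : M →ₗ[A] N) {u : M} (hu : u ∈ powerTorsion I M) :
    f u ∈ powerTorsion I N :=
  hu.trans <| Ideal.radical_mono fun a ha => by
    rw [Ideal.mem_torsionOf_iff] at ha ⊢
    rw [← map_smul, ha, map_zero]

variable (I M) in
lemma powerTorsion_powerTorsion : powerTorsion I (powerTorsion I M) = ⊤ := by
  refine eq_top_iff.2 fun u _ a ha => ?_
  obtain ⟨k, hk⟩ := exists_pow_smul_eq_zero u.2 ha
  exact ⟨k, Subtype.ext hk⟩

lemma powerTorsion_eq_top_of_surjective {f : M →ₗ[A] N} (hf : Function.Surjective f)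
    (hM : powerTorsion I M = ⊤) : powerTorsion I N = ⊤ := by
  refine eq_top_iff.2 fun v _ => ?_
  obtain ⟨u, rfl⟩ := hf v
  exact map_mem_powerTorsion f (hM ▸ Submodule.mem_top)

lemma powerTorsion_span_singleton_le_add (x : A) {a : A}
    (ha : powerTorsion (Ideal.span {a}) M = ⊤) :
    powerTorsion (Ideal.span {x}) M ≤ powerTorsion (Ideal.span {x + a}) M := by
  have hsup : Ideal.span {x + a} ≤ (Ideal.span {x} ⊔ Ideal.span {a}).radical :=
    ((Ideal.span_singleton_le_iff_mem _).2 <| add_mem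
      (Ideal.mem_sup_left (Ideal.mem_span_singleton_self x))
      (Ideal.mem_sup_right (Ideal.mem_span_singleton_self a))).trans Ideal.le_radical
  simpa only [powerTorsion_sup, ha, inf_top_eq] using powerTorsion_anti (M := M) hsup

end PowerTorsion

section CechQuotient

/-- The quotient `M_y / im M`, i.e. the top Čech cohomology of `M` along the single element `y`. -/
def CechQuotient {A : Type u} [CommRing A] (y : A) (M : Type v) [AddCommGroup M] [Module A M] :
    Type (max u v) :=
  LocalizedModule (.powers y) M ⧸ LinearMap.range (LocalizedModule.mkLinearMap (.powers y) M)

namespace CechQuotient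

variable {A : Type u} [CommRing A] {y : A} {M N B : Type*} [AddCommGroup M] [Module A M]
  [AddCommGroup N] [Module A N] [AddCommGroup B] [Module A B]

noncomputable instance : AddCommGroup (CechQuotient y M) := inferInstanceAs <| AddCommGroup
  (_ ⧸ LinearMap.range (LocalizedModule.mkLinearMap (.powers y) M))

noncomputable instance : Module A (CechQuotient y M) := inferInstanceAs <| Module A
  (_ ⧸ LinearMap.range (LocalizedModule.mkLinearMap (.powers y) M))

/-- The quotient map `M_y → M_y / im M`. -/
noncomputable def mk (y : A) (M : Type*) [AddCommGroup M] [Module A M] :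
    LocalizedModule (.powers y) M →ₗ[A] CechQuotient y M :=
  (LinearMap.range (LocalizedModule.mkLinearMap (.powers y) M)).mkQ

lemma mk_surjective : Function.Surjective (mk y M) := Submodule.mkQ_surjective _

lemma exact_mk : Function.Exact (LocalizedModule.mkLinearMap (.powers y) M) (mk y M) :=
  LinearMap.exact_map_mkQ_range _

/-- The power `y ^ n` as a denominator. -/
def denom (y : A) (n : ℕ) : Submonoid.powers y := ⟨y ^ n, n, rfl⟩

/-- The map sending `m` to the class of the fraction `m / y ^ n`. -/
noncomputable def frac (y : A) (n : ℕ) : M →ₗ[A] CechQuotient y M :=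
  mk y M ∘ₗ LocalizedModule.divBy (denom y n) ∘ₗ LocalizedModule.mkLinearMap (.powers y) M

lemma frac_apply (n : ℕ) (m : M) : frac y n m = mk y M (LocalizedModule.mk m (denom y n)) := by
  simp [frac, LocalizedModule.divBy_apply, LocalizedModule.liftOn_mk]

lemma exists_frac (l : CechQuotient y M) : ∃ n m, frac y n m = l := by
  obtain ⟨p, rfl⟩ := mk_surjective l
  induction p using LocalizedModule.induction_on with
  | h m s =>
    obtain ⟨_, n, rfl⟩ := s
    exact ⟨n, m, frac_apply n m⟩

lemma frac_eq_zero_iff {n : ℕ} {m : M} :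
    frac y n m = 0 ↔ ∃ m', m - y ^ n • m' ∈ powerTorsion (Ideal.span {y}) M := by
  have key (m' : M) : LocalizedModule.mk m' 1 = LocalizedModule.mk m (denom y n) ↔
      m - y ^ n • m' ∈ powerTorsion (Ideal.span {y}) M := by
    rw [eq_comm, LocalizedModule.mk_eq, mem_powerTorsion_span_singleton]
    constructor
    · rintro ⟨⟨_, k, rfl⟩, h⟩
      exact ⟨k, by simpa [smul_sub, sub_eq_zero, Submonoid.smul_def, denom] using h⟩
    · rintro ⟨k, h⟩
      exact ⟨denom y k, by simpa [smul_sub, sub_eq_zero, Submonoid.smul_def, denom] using h⟩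
  rw [frac_apply, ← LinearMap.mem_ker, exact_mk.linearMap_ker_eq]
  exact exists_congr key

lemma frac_eq_zero_of_mem {m : M} (hm : m ∈ powerTorsion (Ideal.span {y}) M) (n : ℕ) :
    frac y n m = 0 :=
  frac_eq_zero_iff.2 ⟨0, by simpa using hm⟩

lemma frac_pow_smul (n : ℕ) (m : M) : frac y n (y ^ n • m) = 0 :=
  frac_eq_zero_iff.2 ⟨m, by simp⟩

lemma frac_add (n k : ℕ) (m : M) : frac y (n + k) (y ^ k • m) = frac y n m := by
  rw [frac_apply, frac_apply]
  congr 1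
  rw [LocalizedModule.mk_eq]
  refine ⟨1, ?_⟩
  simp only [Submonoid.smul_def, one_smul, smul_smul, denom, pow_add]

lemma subsingleton_of_powerTorsion_eq_top (h : powerTorsion (Ideal.span {y}) M = ⊤) :
    Subsingleton (CechQuotient y M) := by
  refine subsingleton_of_forall_eq 0 fun l => ?_
  obtain ⟨n, m, rfl⟩ := exists_frac l
  exact frac_eq_zero_of_mem (h ▸ Submodule.mem_top) n

lemma smul_surjective : Function.Surjective fun l : CechQuotient y M => y • l := by
  intro l
  obtain ⟨n, m, rfl⟩ := exists_frac l
  refine ⟨frac y (n + 1) m, ?_⟩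
  simpa only [pow_one, map_smul] using frac_add n 1 m

lemma mem_range_frac_one {l : CechQuotient y M} (h : y • l = 0) :
    l ∈ LinearMap.range (frac y 1 : M →ₗ[A] CechQuotient y M) := by
  obtain ⟨n, m, rfl⟩ := exists_frac l
  rw [← map_smul, frac_eq_zero_iff] at h
  obtain ⟨m', h⟩ := h
  refine ⟨m', ?_⟩
  rw [← sub_eq_zero, ← frac_add 1 n m', add_comm 1 n, ← frac_add n 1 m, pow_one, ← map_sub]
  exact frac_eq_zero_of_mem (by simpa using neg_mem h) _

lemma eventually_mem_map_frac {I : Ideal A} {l : CechQuotient y M}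
    (hl : l ∈ (I • ⊤ : Submodule A (CechQuotient y M))) :
    ∀ᶠ n in Filter.atTop, l ∈ (I • ⊤ : Submodule A M).map (frac y n) := by
  induction hl using Submodule.smul_induction_on' with
  | smul r hr l _ =>
    obtain ⟨n, m, rfl⟩ := exists_frac l
    filter_upwards [Filter.eventually_ge_atTop n] with k hk
    obtain ⟨d, rfl⟩ := Nat.exists_eq_add_of_le hk
    exact ⟨r • y ^ d • m, Submodule.smul_mem_smul hr trivial, by rw [map_smul, frac_add]⟩
  | add a _ b _ ha hb => filter_upwards [ha, hb] with n using add_mem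

lemma eventually_mem_range_frac (l : CechQuotient y M) :
    ∀ᶠ n in Filter.atTop, l ∈ LinearMap.range (frac y n : M →ₗ[A] CechQuotient y M) := by
  simpa using eventually_mem_map_frac (I := ⊤) (l := l) (by simp)

/-- The localization `M_y → N_y` of a linear map `M → N`. -/
noncomputable abbrev awayMap (y : A) (f : M →ₗ[A] N) :
    LocalizedModule (.powers y) M →ₗ[A] LocalizedModule (.powers y) N :=
  IsLocalizedModule.map (.powers y) (LocalizedModule.mkLinearMap (.powers y) M)
    (LocalizedModule.mkLinearMap (.powers y) N) f

/-- The map `M_y / M → N_y / N` induced by a linear map `M → N`. -/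
noncomputable def map (y : A) (f : M →ₗ[A] N) : CechQuotient y M →ₗ[A] CechQuotient y N :=
  Submodule.mapQ _ _ (awayMap y f) <| by
    rintro _ ⟨m, rfl⟩
    exact ⟨f m, (IsLocalizedModule.map_apply _ _ _ f m).symm⟩

@[simp] lemma map_frac (f : M →ₗ[A] N) (n : ℕ) (m : M) :
    map y f (frac y n m) = frac y n (f m) := by
  rw [frac_apply, frac_apply]
  exact congrArg (mk y N) (IsLocalizedModule.map_LocalizedModules _ f m _)

lemma map_surjective {f : M →ₗ[A] N} (hf : Function.Surjective f) :
    Function.Surjective (map y f) := by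
  intro l
  obtain ⟨n, m, rfl⟩ := exists_frac l
  obtain ⟨m, rfl⟩ := hf m
  exact ⟨frac y n m, map_frac f n m⟩

lemma map_exact {f : N →ₗ[A] M} {g : M →ₗ[A] B} (h : Function.Exact f g)
    (hg : Function.Surjective g) : Function.Exact (map y f) (map y g) := by
  intro l
  constructor
  · intro hl
    obtain ⟨n, m, rfl⟩ := exists_frac l
    rw [map_frac, frac_eq_zero_iff] at hl
    obtain ⟨b, hb⟩ := hl
    obtain ⟨m', rfl⟩ := hg b
    rw [← map_smul, ← map_sub, mem_powerTorsion_span_singleton] at hb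
    obtain ⟨j, hj⟩ := hb
    rw [← map_smul] at hj
    obtain ⟨k, hk⟩ := (h _).1 hj
    refine ⟨frac y (n + j) k, ?_⟩
    rw [map_frac, hk, frac_add, map_sub, frac_pow_smul, sub_zero]
  · rintro ⟨l, rfl⟩
    obtain ⟨n, m, rfl⟩ := exists_frac l
    rw [map_frac, map_frac, h.apply_apply_eq_zero, map_zero]

lemma map_comp (f : M →ₗ[A] N) (g : N →ₗ[A] B) : map y (g ∘ₗ f) = map y g ∘ₗ map y f := by
  ext l
  obtain ⟨n, m, rfl⟩ := exists_frac l
  simp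

lemma map_smul_id (c : A) : map y (c • (LinearMap.id : M →ₗ[A] M)) = c • LinearMap.id := by
  ext l
  obtain ⟨n, m, rfl⟩ := exists_frac l
  simp

lemma mkLinearMap_eq_zero_iff {m : M} : LocalizedModule.mkLinearMap (.powers y) M m = 0 ↔
    m ∈ powerTorsion (Ideal.span {y}) M := by
  rw [IsLocalizedModule.eq_zero_iff (.powers y), mem_powerTorsion_span_singleton]
  exact ⟨fun ⟨⟨_, k, hk⟩, h⟩ => ⟨k, by subst hk; exact h⟩, fun ⟨k, h⟩ => ⟨denom y k, h⟩⟩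

lemma exact_subtype_mkLinearMap :
    Function.Exact (powerTorsion (Ideal.span {y}) M).subtype
      (LocalizedModule.mkLinearMap (.powers y) M) := fun m => by
  rw [mkLinearMap_eq_zero_iff, Submodule.coe_subtype, Subtype.range_coe, SetLike.mem_coe]

lemma awayMap_injective {f : M →ₗ[A] N}
    (hf : LinearMap.ker f ≤ powerTorsion (Ideal.span {y}) M) :
    Function.Injective (awayMap y f) := by
  refine (injective_iff_map_eq_zero _).2 fun p hp => ?_
  obtain ⟨⟨m, s⟩, rfl⟩ := IsLocalizedModule.mk'_surjective (.powers y)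
    (LocalizedModule.mkLinearMap (.powers y) M) p
  rw [Function.uncurry_apply_pair, IsLocalizedModule.map_mk', IsLocalizedModule.mk'_eq_zero,
    mkLinearMap_eq_zero_iff, mem_powerTorsion_span_singleton] at hp
  obtain ⟨j, hj⟩ := hp
  rw [← map_smul] at hj
  obtain ⟨k, hk⟩ := mem_powerTorsion_span_singleton.1 (hf hj)
  rw [Function.uncurry_apply_pair, IsLocalizedModule.mk'_eq_zero, mkLinearMap_eq_zero_iff,
    mem_powerTorsion_span_singleton]
  exact ⟨k + j, by rw [pow_add, mul_smul, hk]⟩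

/-- The connecting map of the snake lemma, for the localization of `M → N → B` at `y`. -/
lemma exists_exact_map {f : M →ₗ[A] N} {g : N →ₗ[A] B} (h : Function.Exact f g)
    (hg : Function.Surjective g) (hf : LinearMap.ker f ≤ powerTorsion (Ideal.span {y}) M) :
    ∃ δ : powerTorsion (Ideal.span {y}) B →ₗ[A] CechQuotient y M,
      Function.Exact δ (map y f) :=
  ⟨_, SnakeLemma.exact_δ'_left (LocalizedModule.mkLinearMap (.powers y) M)
    (LocalizedModule.mkLinearMap (.powers y) N) (LocalizedModule.mkLinearMap (.powers y) B)
    f g h (awayMap y f) (awayMap y g) (IsLocalizedModule.map_exact _ _ _ _ _ _ h)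
    (IsLocalizedModule.map_comp _ _ _ f) (IsLocalizedModule.map_comp _ _ _ g)
    _ exact_subtype_mkLinearMap (mk y M) exact_mk (mk y N) exact_mk hg (awayMap_injective hf)
    (map y f) rfl mk_surjective⟩

end CechQuotient

end CechQuotient

section TopCohomology

/-- The iterated functor `M ↦ M_{y₁}/M ↦ ⋯`, on bundled modules so that the recursion carries the
module structure along. -/
noncomputable def cechIterate {A : Type u} [CommRing A] :
    List A → ModuleCat.{u} A → ModuleCat.{u} A
  | [], M => M
  | y :: ys, M => cechIterate ys (ModuleCat.of A (CechQuotient y M))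

/-- The top local cohomology module `H^r_{(y₁, …, y_r)}(M)` of `M` along the list `y₁, …, y_r`,
modelled by applying `M ↦ M_y / im M` successively for `y = y₁, …, y_r`. -/
def TopCohomology {A : Type u} [CommRing A] (ys : List A) (M : Type u) [AddCommGroup M]
    [Module A M] : Type u :=
  cechIterate ys (ModuleCat.of A M)

/-- The ideal generated by the `k`-th powers of the members of a list. -/
abbrev powersIdeal {A : Type*} [CommRing A] (xs : List A) (k : ℕ) : Ideal A :=
  Ideal.ofList (xs.map (· ^ k))

lemma pow_mem_powersIdeal {A : Type*} [CommRing A] {xs : List A} {x : A} (hx : x ∈ xs) (k : ℕ) :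
    x ^ k ∈ powersIdeal xs k :=
  Ideal.subset_span (List.mem_map_of_mem hx)

lemma prod_pow_smul_mem_powersIdeal_smul {A M : Type*} [CommRing A] [AddCommGroup M] [Module A M]
    {xs : List A} {k : ℕ} {m : M} (hm : m ∈ (powersIdeal xs k • ⊤ : Submodule A M)) (d : ℕ) :
    xs.prod ^ d • m ∈ (powersIdeal xs (k + d) • ⊤ : Submodule A M) := by
  have hle : powersIdeal xs k ≤
      Submodule.comap (LinearMap.lsmul A A (xs.prod ^ d)) (powersIdeal xs (k + d)) := by
    refine Submodule.span_le.2 fun z hz => ?_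
    obtain ⟨x, hx, rfl⟩ := List.mem_map.1 hz
    obtain ⟨q, hq⟩ := List.dvd_prod hx
    have : xs.prod ^ d * x ^ k = q ^ d * x ^ (k + d) := by rw [hq]; ring
    change xs.prod ^ d * x ^ k ∈ powersIdeal xs (k + d)
    exact this ▸ Ideal.mul_mem_left _ _ (pow_mem_powersIdeal hx _)
  induction hm using Submodule.smul_induction_on' with
  | smul r hr l _ =>
    rw [smul_smul]
    exact Submodule.smul_mem_smul (hle hr) trivial
  | add a _ b _ ha hb => rw [smul_add]; exact add_mem ha hb

namespace TopCohomology

variable {A : Type u} [CommRing A]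

noncomputable instance (ys : List A) (M : Type u) [AddCommGroup M] [Module A M] :
    AddCommGroup (TopCohomology ys M) :=
  inferInstanceAs (AddCommGroup (cechIterate ys (ModuleCat.of A M)))

noncomputable instance (ys : List A) (M : Type u) [AddCommGroup M] [Module A M] :
    Module A (TopCohomology ys M) :=
  inferInstanceAs (Module A (cechIterate ys (ModuleCat.of A M)))

/-- The map on top local cohomology induced by a linear map. -/
noncomputable def map : (ys : List A) → {M N : Type u} → [AddCommGroup M] → [AddCommGroup N] →
    [Module A M] → [Module A N] → (M →ₗ[A] N) → (TopCohomology ys M →ₗ[A] TopCohomology ys N)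
  | [], _, _, _, _, _, _, f => f
  | y :: ys, _, _, _, _, _, _, f => map ys (CechQuotient.map y f)

/-- The map sending `m` to the class of the fraction `m / (y₁ ⋯ y_r) ^ n`. -/
noncomputable def frac : (ys : List A) → {M : Type u} → [AddCommGroup M] → [Module A M] → ℕ →
    (M →ₗ[A] TopCohomology ys M)
  | [], _, _, _, _ => LinearMap.id
  | y :: ys, _, _, _, n => frac ys n ∘ₗ CechQuotient.frac y n

/-- Iterating the construction along `xs ++ [y]` means applying `M ↦ M_y / im M` last for `y`. -/
noncomputable def concatEquiv (y : A) : (xs : List A) → {M : Type u} → [AddCommGroup M] →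
    [Module A M] → (TopCohomology (xs ++ [y]) M ≃ₗ[A] CechQuotient y (TopCohomology xs M))
  | [], _, _, _ => LinearEquiv.refl A _
  | _ :: xs, _, _, _ => concatEquiv y xs

variable {M N B : Type u} [AddCommGroup M] [Module A M] [AddCommGroup N] [Module A N]
  [AddCommGroup B] [Module A B]

lemma map_surjective (ys : List A) {f : M →ₗ[A] N} (hf : Function.Surjective f) :
    Function.Surjective (map ys f) := by
  induction ys generalizing M N with
  | nil => exact hf
  | cons y _ ih => exact ih (CechQuotient.map_surjective hf)

lemma map_exact (ys : List A) {f : N →ₗ[A] M} {g : M →ₗ[A] B} (h : Function.Exact f g)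
    (hg : Function.Surjective g) : Function.Exact (map ys f) (map ys g) := by
  induction ys generalizing M N B with
  | nil => exact h
  | cons y _ ih => exact ih (CechQuotient.map_exact h hg) (CechQuotient.map_surjective hg)

lemma map_comp (ys : List A) (f : M →ₗ[A] N) (g : N →ₗ[A] B) :
    map ys (g ∘ₗ f) = map ys g ∘ₗ map ys f := by
  induction ys generalizing M N B with
  | nil => rfl
  | cons y ys ih => exact (congrArg (map ys) (CechQuotient.map_comp f g)).trans (ih _ _)

lemma map_smul_id (ys : List A) (c : A) :
    map ys (c • (LinearMap.id : M →ₗ[A] M)) = c • LinearMap.id := by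
  induction ys generalizing M with
  | nil => rfl
  | cons y ys ih => exact (congrArg (map ys) (CechQuotient.map_smul_id c)).trans ih

lemma frac_cons (y : A) (ys : List A) (n : ℕ) (m : M) :
    frac (y :: ys) n m = frac ys n (CechQuotient.frac y n m) := rfl

lemma frac_add (ys : List A) (n d : ℕ) (m : M) :
    frac ys (n + d) (ys.prod ^ d • m) = frac ys n m := by
  induction ys generalizing M with
  | nil => rw [List.prod_nil, one_pow, one_smul]; rfl
  | cons y ys ih =>
    rw [frac_cons, frac_cons, List.prod_cons, mul_pow, mul_comm, mul_smul, map_smul,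
      CechQuotient.frac_add]
    exact ih _

lemma exists_frac (ys : List A) (u : TopCohomology ys M) : ∃ n m, frac ys n m = u := by
  induction ys generalizing M with
  | nil => exact ⟨0, u, rfl⟩
  | cons y ys ih =>
    obtain ⟨n, w, rfl⟩ := ih u
    obtain ⟨k, ⟨m, hm⟩, hk⟩ := ((CechQuotient.eventually_mem_range_frac w).and
      (Filter.eventually_ge_atTop n)).exists
    obtain ⟨d, rfl⟩ := Nat.exists_eq_add_of_le hk
    exact ⟨n + d, ys.prod ^ d • m, by rw [frac_cons, map_smul, hm]; exact frac_add ys n d w⟩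

lemma pow_smul_frac (n : ℕ) (m : M) {ys : List A} {y : A} (hy : y ∈ ys) :
    y ^ n • frac ys n m = 0 := by
  induction ys generalizing M with
  | nil => exact absurd hy List.not_mem_nil
  | cons z ys ih =>
    rcases List.mem_cons.1 hy with rfl | hy
    · rw [← map_smul, frac_cons, CechQuotient.frac_pow_smul]
      exact map_zero _
    · exact ih _ hy

lemma powersIdeal_smul_le_ker_frac (ys : List A) (n : ℕ) :
    (powersIdeal ys n • ⊤ : Submodule A M) ≤ LinearMap.ker (frac ys n) := by
  have hle (m : M) : powersIdeal ys n ≤ Ideal.torsionOf A _ (frac ys n m) := by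
    refine Ideal.span_le.2 fun z hz => ?_
    obtain ⟨x, hx, rfl⟩ := List.mem_map.1 hz
    exact pow_smul_frac n m hx
  refine Submodule.smul_le.2 fun r hr m _ => ?_
  rw [LinearMap.mem_ker, map_smul]
  exact hle m hr

lemma exists_prod_pow_smul_mem (ys : List A) {n : ℕ} {m : M} (h : frac ys n m = 0) :
    ∃ k, ys.prod ^ k • m ∈ (powersIdeal ys (n + k) • ⊤ : Submodule A M) := by
  induction ys generalizing M with
  | nil => exact ⟨0, by rw [show m = 0 from h, smul_zero]; exact zero_mem _⟩
  | cons y ys ih =>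
    obtain ⟨k, hk⟩ := ih (m := CechQuotient.frac y n m) h
    obtain ⟨N, ⟨m', hm', hfrac⟩, hN⟩ := ((CechQuotient.eventually_mem_map_frac hk).and
      (Filter.eventually_ge_atTop (n + k))).exists
    obtain ⟨e, rfl⟩ := Nat.exists_eq_add_of_le hN
    have hzero : CechQuotient.frac y (n + k + e) (y ^ (k + e) • ys.prod ^ k • m - m') = 0 := by
      rw [map_sub, hfrac, add_assoc, CechQuotient.frac_add, map_smul, sub_self]
    obtain ⟨w, hw⟩ := CechQuotient.frac_eq_zero_iff.1 hzero
    obtain ⟨j, hj⟩ := mem_powerTorsion_span_singleton.1 hw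
    refine ⟨k + (e + j), ?_⟩
    have hsum : (y :: ys).prod ^ (k + (e + j)) • m = y ^ j • ys.prod ^ (e + j) • m' +
        y ^ (n + (k + (e + j))) • ys.prod ^ (e + j) • w := by
      have := congrArg (ys.prod ^ (e + j) • ·) hj
      rw [List.prod_cons]
      simp only [smul_sub, smul_zero, sub_sub, sub_eq_zero, smul_add, smul_smul] at this ⊢
      convert this using 2 <;> ring_nf
    rw [hsum, powersIdeal, List.map_cons, Ideal.ofList_cons]
    refine add_mem (Submodule.smul_mem _ _ ?_) (Submodule.smul_mem_smul ?_ trivial)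
    · have := prod_pow_smul_mem_powersIdeal_smul hm' (e + j)
      rw [add_assoc] at this
      exact Submodule.smul_mono_left le_sup_right this
    · exact Ideal.mem_sup_left (Ideal.mem_span_singleton_self _)

lemma frac_eq_zero_iff (ys : List A) (n : ℕ) (m : M) : frac ys n m = 0 ↔
    ∃ k, ys.prod ^ k • m ∈ (powersIdeal ys (n + k) • ⊤ : Submodule A M) := by
  refine ⟨exists_prod_pow_smul_mem ys, fun ⟨k, hk⟩ => ?_⟩
  rw [← frac_add ys n k]
  exact powersIdeal_smul_le_ker_frac ys (n + k) hk

lemma mem_annihilator_iff {c : A} {xs : List A} :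
    c ∈ Module.annihilator A (TopCohomology xs M) ↔
      ∀ (n : ℕ) (m : M), frac xs n (c • m) = 0 := by
  rw [Module.mem_annihilator]
  constructor
  · intro h n m
    rw [map_smul, h]
  · intro h u
    obtain ⟨n, m, rfl⟩ := exists_frac xs u
    rw [← map_smul, h]

variable (M) in
lemma annihilator_le_annihilator (xs : List A) :
    Module.annihilator A M ≤ Module.annihilator A (TopCohomology xs M) :=
  fun _ hc => mem_annihilator_iff.2 fun n m => by rw [Module.mem_annihilator.1 hc, map_zero]

lemma annihilator_eq_of_perm {xs ys : List A} (h : xs.Perm ys) :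
    Module.annihilator A (TopCohomology xs M) = Module.annihilator A (TopCohomology ys M) := by
  have hpow (k : ℕ) : powersIdeal xs k = powersIdeal ys k :=
    congrArg Ideal.span (Set.ext fun _ => (h.map _).mem_iff)
  ext c
  simp only [mem_annihilator_iff, frac_eq_zero_iff, hpow, h.prod_eq]

lemma powerTorsion_ofList_eq_top (xs : List A) :
    powerTorsion (Ideal.ofList xs) (TopCohomology xs M) = ⊤ := by
  refine eq_top_iff.2 fun u _ => Ideal.span_le.2 fun x hx => ?_
  obtain ⟨n, m, rfl⟩ := exists_frac xs u
  exact ⟨n, pow_smul_frac n m hx⟩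

end TopCohomology

/-- Replacing `x` by `x + a` does not change the localization when `a` acts locally nilpotently:
write `x ^ (n + f) = ((x + a) - a) ^ (n + f)` as a combination of `(x + a) ^ n` and `a ^ f`. -/
lemma CechQuotient.annihilator_le_annihilator_add {A : Type u} [CommRing A] {Z : Type v}
    [AddCommGroup Z] [Module A Z] (x : A) {a : A} (ha : powerTorsion (Ideal.span {a}) Z = ⊤) :
    Module.annihilator A (CechQuotient x Z) ≤ Module.annihilator A (CechQuotient (x + a) Z) := by
  intro c hc
  have htor := powerTorsion_span_singleton_le_add x ha
  refine Module.mem_annihilator.2 fun l => ?_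
  obtain ⟨n, z, rfl⟩ := exists_frac l
  obtain ⟨f, hf⟩ := mem_powerTorsion_span_singleton.1 (ha ▸ Submodule.mem_top : c • z ∈ _)
  have hx := Module.mem_annihilator.1 hc (frac x (n + f) z)
  rw [← map_smul, frac_eq_zero_iff] at hx
  obtain ⟨w, hw⟩ := hx
  have hw' : a ^ f • w ∈ powerTorsion (Ideal.span {x + a}) Z := by
    obtain ⟨k, hk⟩ := mem_powerTorsion_span_singleton.1 hw
    refine htor (mem_powerTorsion_span_singleton.2 ⟨k + (n + f), ?_⟩)
    rw [smul_sub, sub_eq_zero] at hk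
    rw [pow_add, mul_smul, smul_comm _ (a ^ f), smul_comm _ (a ^ f), ← hk, smul_comm, hf,
      smul_zero]
  obtain ⟨q, r, hqr⟩ : ∃ q r : A, (x + a) ^ n * q + a ^ f * r = x ^ (n + f) := by
    have := Ideal.add_pow_mem_of_pow_mem_of_le (I := Ideal.span {(x + a) ^ n, a ^ f})
      (a := x + a) (b := -a) (m := n) (n := f) (k := n + f) (Ideal.subset_span (by simp))
      (by rw [neg_pow]; exact Ideal.mul_mem_left _ _ (Ideal.subset_span (by simp)))
      (by omega)
    rw [add_neg_cancel_right] at this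
    obtain ⟨q, r, h⟩ := Ideal.mem_span_pair.1 this
    exact ⟨q, r, by rw [← h]; ring⟩
  rw [← map_smul, frac_eq_zero_iff]
  refine ⟨q • w, ?_⟩
  have hsum : c • z - (x + a) ^ n • q • w = (c • z - x ^ (n + f) • w) + r • a ^ f • w := by
    rw [← hqr]; module
  exact hsum ▸ add_mem (htor hw) (Submodule.smul_mem _ _ hw')

end TopCohomology

section ElementaryEquiv

/-- The equivalence of lists generated by permutations and by adding to the first element an
element of the ideal generated by the others. -/
inductive ElementaryEquiv {A : Type*} [CommRing A] : List A → List A → Prop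
  | perm {xs ys : List A} (h : xs.Perm ys) : ElementaryEquiv xs ys
  | add (x : A) {xs : List A} {a : A} (ha : a ∈ Ideal.ofList xs) :
      ElementaryEquiv (x :: xs) ((x + a) :: xs)
  | trans {xs ys zs : List A} (h : ElementaryEquiv xs ys) (h' : ElementaryEquiv ys zs) :
      ElementaryEquiv xs zs

namespace ElementaryEquiv

lemma length_eq {A : Type*} [CommRing A] {xs ys : List A} (h : ElementaryEquiv xs ys) :
    xs.length = ys.length := by
  induction h with
  | perm h => exact h.length_eq
  | add => rfl
  | trans _ _ ih ih' => exact ih.trans ih'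

lemma ofList_eq {A : Type*} [CommRing A] {xs ys : List A} (h : ElementaryEquiv xs ys) :
    Ideal.ofList xs = Ideal.ofList ys := by
  induction h with
  | perm h => exact congrArg Ideal.span (Set.ext fun _ => h.mem_iff)
  | add x ha =>
    simp only [Ideal.ofList_cons]
    refine le_antisymm (sup_le ?_ le_sup_right) (sup_le ?_ le_sup_right) <;>
      rw [Ideal.span_singleton_le_iff_mem]
    · exact (Ideal.add_mem_iff_left _ (Ideal.mem_sup_right ha)).1
        (Ideal.mem_sup_left (Ideal.mem_span_singleton_self _))
    · exact add_mem (Ideal.mem_sup_left (Ideal.mem_span_singleton_self x)) (Ideal.mem_sup_right ha)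
  | trans _ _ ih ih' => exact ih.trans ih'

lemma annihilator_topCohomology_eq {A : Type u} [CommRing A] {xs ys : List A}
    (h : ElementaryEquiv xs ys) (M : Type u) [AddCommGroup M] [Module A M] :
    Module.annihilator A (TopCohomology xs M) = Module.annihilator A (TopCohomology ys M) := by
  have hconcat (x : A) (zs : List A) : Module.annihilator A (TopCohomology (x :: zs) M) =
      Module.annihilator A (CechQuotient x (TopCohomology zs M)) :=
    (TopCohomology.annihilator_eq_of_perm (List.perm_append_singleton x zs).symm).trans
      (TopCohomology.concatEquiv x zs).annihilator_eq
  have hle (x : A) {zs : List A} {a : A} (ha : a ∈ Ideal.ofList zs) :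
      Module.annihilator A (TopCohomology (x :: zs) M) ≤
        Module.annihilator A (TopCohomology ((x + a) :: zs) M) := by
    rw [hconcat, hconcat]
    refine CechQuotient.annihilator_le_annihilator_add x (eq_top_iff.2 ?_)
    rw [← TopCohomology.powerTorsion_ofList_eq_top zs]
    exact powerTorsion_anti (((Ideal.span_singleton_le_iff_mem _).2 ha).trans Ideal.le_radical)
  induction h with
  | perm h => exact TopCohomology.annihilator_eq_of_perm h
  | @add x xs a ha =>
    exact le_antisymm (hle x ha)
      ((hle (x + a) (neg_mem ha)).trans_eq (by rw [add_neg_cancel_right]))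
  | trans _ _ ih ih' => exact ih.trans ih'

end ElementaryEquiv

end ElementaryEquiv

section PrimeAvoidance

variable {A : Type*} [CommRing A]

lemma exists_mem_add_notMem_of_isPrime (x : A) (I : Ideal A) (S : Finset (Ideal A))
    (hS : ∀ q ∈ S, q.IsPrime) (hx : ∀ q ∈ S, x ∈ q → ¬ I ≤ q) :
    ∃ a ∈ I, ∀ q ∈ S, x + a ∉ q := by
  classical
  induction hn : S.card generalizing S with
  | zero =>
    rw [Finset.card_eq_zero] at hn
    exact ⟨0, I.zero_mem, by simp [hn]⟩
  | succ n ih =>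
    obtain ⟨q, hq_min⟩ := S.exists_minimal (Finset.card_pos.1 (by omega))
    have hq := hq_min.prop
    obtain ⟨a, ha, hav⟩ := ih (S.erase q) (fun p hp => hS p (Finset.mem_of_mem_erase hp))
      (fun p hp => hx p (Finset.mem_of_mem_erase hp)) (by rw [Finset.card_erase_of_mem hq]; omega)
    have eq_or_mem_erase {p : Ideal A} (hp : p ∈ S) : p = q ∨ p ∈ S.erase q :=
      or_iff_not_imp_left.2 fun h => Finset.mem_erase.2 ⟨h, hp⟩
    by_cases h : x + a ∈ q
    swap
    · exact ⟨a, ha, fun p hp => (eq_or_mem_erase hp).elim (fun e => e ▸ h) (hav p)⟩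
    have hIq : ¬ I ≤ q := fun hI => hx q hq ((Ideal.add_mem_iff_left q (hI ha)).1 h) hI
    -- by minimality of `q`, some `b ∈ I` lies in all other primes but not in `q`
    have hprod : ¬ I ⊓ (S.erase q).inf id ≤ q := by
      rw [(hS q hq).inf_le, (hS q hq).inf_le']
      rintro (hI | ⟨p, hp, hpq⟩)
      · exact hIq hI
      · obtain ⟨hne, hpS⟩ := Finset.mem_erase.1 hp
        exact hne (le_antisymm hpq (hq_min.le_of_le hpS hpq))
    obtain ⟨b, ⟨hbI, hb⟩, hbq⟩ := SetLike.not_le_iff_exists.1 hprod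
    refine ⟨a + b, I.add_mem ha hbI, fun p hp => ?_⟩
    rw [← add_assoc]
    obtain rfl | hp' := eq_or_mem_erase hp
    · exact fun hc => hbq ((Ideal.add_mem_iff_right p h).1 hc)
    · exact fun hc => hav p hp' ((Ideal.add_mem_iff_left p
        ((Finset.inf_le hp' : (S.erase q).inf id ≤ p) hb)).1 hc)

/-- Each element of `xs` in turn can be moved away from finitely many primes, depending on the
elements chosen before it, by adding a combination of the others and of `z`. -/
theorem ElementaryEquiv.exists_of_avoidance (xs : List A) (z : A) (Q : List A → Prop)
    (hnil : Q []) (hstep : ∀ ys, Q ys → ∃ S : Set (Ideal A), S.Finite ∧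
      (∀ q ∈ S, q.IsPrime ∧ ¬ Ideal.ofList (xs ++ [z]) ≤ q) ∧
      ∀ y, (∀ q ∈ S, y ∉ q) → Q (ys ++ [y])) :
    ∃ ys, ElementaryEquiv (xs ++ [z]) (ys ++ [z]) ∧ Q ys := by
  suffices h : ∀ us ws : List A, ElementaryEquiv (xs ++ [z]) (ws ++ us ++ [z]) → Q ws →
      ∃ ys, ElementaryEquiv (xs ++ [z]) (ys ++ [z]) ∧ Q ys from
    h xs [] (.perm (.refl _)) hnil
  intro us
  induction us with
  | nil => exact fun ws hws hQ => ⟨ws, by simpa using hws, hQ⟩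
  | cons u us ih =>
    intro ws hws hQ
    obtain ⟨S, hfin, hS, havoid⟩ := hstep ws hQ
    have hmove (v : A) : (ws ++ v :: us ++ [z]).Perm (v :: (ws ++ us ++ [z])) := by
      simp
    have hofList : Ideal.ofList (xs ++ [z]) =
        Ideal.span {u} ⊔ Ideal.ofList (ws ++ us ++ [z]) := by
      rw [(hws.trans (.perm (hmove u))).ofList_eq, Ideal.ofList_cons]
    obtain ⟨a, ha, hau⟩ := exists_mem_add_notMem_of_isPrime u (Ideal.ofList (ws ++ us ++ [z]))
      hfin.toFinset (fun q hq => (hS q (hfin.mem_toFinset.1 hq)).1) fun q hq huq hle =>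
        (hS q (hfin.mem_toFinset.1 hq)).2 <| hofList.trans_le <|
          sup_le ((Ideal.span_singleton_le_iff_mem _).2 huq) hle
    refine ih (ws ++ [u + a]) ?_ (havoid _ fun q hq => hau q (hfin.mem_toFinset.2 hq))
    have := (hws.trans (.perm (hmove u))).trans ((ElementaryEquiv.add u ha).trans
      (.perm (hmove (u + a)).symm))
    simpa using this

end PrimeAvoidance

section Dimension

variable {A : Type*} [CommRing A] {I : Ideal A}

lemma supportDim_quotSMulTop_quotient (I : Ideal A) (y : A) :
    Module.supportDim A (QuotSMulTop y (A ⧸ I)) =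
      ringKrullDim (A ⧸ (I ⊔ Ideal.span {y})) := by
  rw [ringKrullDim_quotient, Module.supportDim, Module.support_quotSMulTop,
    Module.support_eq_zeroLocus, Ideal.annihilator_quotient, PrimeSpectrum.zeroLocus_sup,
    PrimeSpectrum.zeroLocus_span]

lemma ringKrullDim_quotient_sup_span_add_one_le {y : A} (hy : ∀ q ∈ I.minimalPrimes, y ∉ q) :
    ringKrullDim (A ⧸ (I ⊔ Ideal.span {y})) + 1 ≤ ringKrullDim (A ⧸ I) := by
  rw [← supportDim_quotSMulTop_quotient, ← Module.supportDim_quotient_eq_ringKrullDim]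
  apply Module.supportDim_quotSMulTop_succ_le_of_notMem_minimalPrimes
  rwa [Ideal.annihilator_quotient]

variable [IsLocalRing A]

lemma maximalIdeal_le_radical_iff :
    maximalIdeal A ≤ I.radical ↔ ringKrullDim (A ⧸ I) ≤ 0 := by
  rw [← Nat.cast_zero, ringKrullDim, ← Order.krullDimLE_iff, ← Ring.KrullDimLE,
    Ideal.krullDimLE_zero_quotient_iff_forall_minimalPrimes_isMaximal,
    ← Ideal.sInf_minimalPrimes, le_sInf_iff]
  refine forall₂_congr fun p hp => ⟨fun h => ?_, fun h => (IsLocalRing.eq_maximalIdeal h).ge⟩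
  exact le_antisymm h (le_maximalIdeal hp.1.1.ne_top) ▸ maximalIdeal.isMaximal A

variable [IsNoetherianRing A]

lemma ringKrullDim_quotient_le_sup_span_add_one {y : A} (hy : y ∈ maximalIdeal A) :
    ringKrullDim (A ⧸ I) ≤ ringKrullDim (A ⧸ (I ⊔ Ideal.span {y})) + 1 := by
  rw [← supportDim_quotSMulTop_quotient, ← Module.supportDim_quotient_eq_ringKrullDim]
  exact Module.supportDim_le_supportDim_quotSMulTop_succ hy

lemma ringKrullDim_quotient_le_length {xs : List A} (hxs : ∀ x ∈ xs, x ∈ maximalIdeal A)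
    (hm : maximalIdeal A ≤ (I ⊔ Ideal.ofList xs).radical) :
    ringKrullDim (A ⧸ I) ≤ xs.length := by
  induction xs generalizing I with
  | nil =>
    rw [Ideal.ofList_nil, sup_bot_eq] at hm
    simpa using maximalIdeal_le_radical_iff.1 hm
  | cons x xs ih =>
    obtain ⟨hx, hxs⟩ := List.forall_mem_cons.1 hxs
    rw [Ideal.ofList_cons, ← sup_assoc] at hm
    rw [List.length_cons, Nat.cast_succ]
    exact (ringKrullDim_quotient_le_sup_span_add_one hx).trans (by gcongr; exact ih hxs hm)

end Dimension

section Vanishing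

namespace TopCohomology

lemma powerTorsion_sup_ofList_eq_top {A : Type u} [CommRing A] {M : Type u} [AddCommGroup M]
    [Module A M] {I : Ideal A} (hI : I ≤ Module.annihilator A M) (xs : List A) :
    powerTorsion (I ⊔ Ideal.ofList xs) (TopCohomology xs M) = ⊤ := by
  rw [powerTorsion_sup, powerTorsion_ofList_eq_top, inf_top_eq, eq_top_iff]
  refine fun u _ a ha => ⟨1, ?_⟩
  rw [pow_one]
  obtain ⟨n, m, rfl⟩ := exists_frac xs u
  rw [Ideal.mem_torsionOf_iff, ← map_smul, Module.mem_annihilator.1 (hI ha), map_zero]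

variable {A : Type u} [CommRing A] [IsNoetherianRing A] [IsLocalRing A] {xs : List A} {I : Ideal A}

/-- A list longer than the dimension can be replaced by one whose last member is redundant in
generating a primary ideal of `A ⧸ I`. -/
lemma exists_elementaryEquiv_le_radical {z : A}
    (hdim : ringKrullDim (A ⧸ I) < (xs ++ [z]).length)
    (hm : maximalIdeal A ≤ (I ⊔ Ideal.ofList (xs ++ [z])).radical) :
    ∃ ys, ElementaryEquiv (xs ++ [z]) (ys ++ [z]) ∧
      maximalIdeal A ≤ (I ⊔ Ideal.ofList ys).radical := by
  refine (ElementaryEquiv.exists_of_avoidance xs z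
    (fun ys => maximalIdeal A ≤ (I ⊔ Ideal.ofList ys).radical ∨
      ringKrullDim (A ⧸ (I ⊔ Ideal.ofList ys)) + ys.length ≤ ringKrullDim (A ⧸ I))
    (.inr (by rw [Ideal.ofList_nil, sup_bot_eq]; simp)) fun ys hys => ?_).imp
    fun ys ⟨hequiv, hys⟩ => ⟨hequiv, hys.elim id fun h => maximalIdeal_le_radical_iff.2 ?_⟩
  · by_cases hrad : maximalIdeal A ≤ (I ⊔ Ideal.ofList ys).radical
    · refine ⟨∅, Set.finite_empty, by simp, fun y _ => .inl (hrad.trans (Ideal.radical_mono ?_))⟩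
      rw [Ideal.ofList_append]
      exact sup_le_sup_left le_sup_left I
    refine ⟨_, Ideal.finite_minimalPrimes_of_isNoetherianRing A (I ⊔ Ideal.ofList ys),
      fun q hq => ⟨hq.1.1, fun hle => hrad ?_⟩, fun y hy => .inr ?_⟩
    · have hmq : maximalIdeal A ≤ q := hm.trans
        (hq.1.1.radical_le_iff.2 (sup_le (le_sup_left.trans hq.1.2) hle))
      rw [← Ideal.sInf_minimalPrimes]
      exact le_sInf fun p hp =>
        hmq.trans (hq.2 hp.1 ((le_maximalIdeal hp.1.1.ne_top).trans hmq))
    · rw [Ideal.ofList_append, Ideal.ofList_singleton, ← sup_assoc, List.length_append]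
      refine le_trans ?_ (hys.resolve_left hrad)
      rw [List.length_singleton, Nat.cast_succ, add_comm (ys.length : WithBot ℕ∞), ← add_assoc]
      gcongr
      exact ringKrullDim_quotient_sup_span_add_one_le hy
  · rw [hequiv.length_eq, List.length_append, List.length_singleton, Nat.cast_succ,
      ENat.WithBot.lt_add_one_iff] at hdim
    exact ENat.WithBot.add_le_add_natCast_right_iff.1 ((h.trans hdim).trans_eq (zero_add _).symm)

/-- Grothendieck's vanishing theorem for the top local cohomology of `A ⧸ I`. -/
theorem subsingleton_of_ringKrullDim_lt_length (hdim : ringKrullDim (A ⧸ I) < xs.length)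
    (hxs : ∀ x ∈ xs, x ∈ maximalIdeal A)
    (hm : maximalIdeal A ≤ (I ⊔ Ideal.ofList xs).radical) :
    Subsingleton (TopCohomology xs (A ⧸ I)) := by
  obtain rfl | ⟨xs, z, rfl⟩ := xs.eq_nil_or_concat'
  · by_contra hc
    have : Nontrivial (A ⧸ I) := not_subsingleton_iff_nontrivial.1 hc
    exact absurd hdim (not_lt.2 (by simpa using ringKrullDim_nonneg_of_nontrivial (R := A ⧸ I)))
  obtain ⟨ys, hys, hrad⟩ := exists_elementaryEquiv_le_radical hdim hm
  have hz : powerTorsion (Ideal.span {z}) (TopCohomology ys (A ⧸ I)) = ⊤ := by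
    rw [eq_top_iff,
      ← powerTorsion_sup_ofList_eq_top (M := A ⧸ I) (I := I) Ideal.annihilator_quotient.ge ys]
    refine powerTorsion_anti (le_trans ?_ hrad)
    exact (Ideal.span_singleton_le_iff_mem _).2 (hxs z (by simp))
  have hT : Subsingleton (TopCohomology (ys ++ [z]) (A ⧸ I)) :=
    @Equiv.subsingleton _ _ (concatEquiv z ys).toEquiv
      (CechQuotient.subsingleton_of_powerTorsion_eq_top hz)
  rwa [← Module.annihilator_eq_top_iff (R := A), hys.annihilator_topCohomology_eq,
    Module.annihilator_eq_top_iff]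

end TopCohomology

end Vanishing

section AssociatedPrimes

variable {A M N : Type*} [CommRing A] [IsNoetherianRing A] [AddCommGroup M] [Module A M]
  [AddCommGroup N] [Module A N] {I J q : Ideal A}

lemma mem_associatedPrimes_iff_eq_torsionOf :
    q ∈ associatedPrimes A M ↔ q.IsPrime ∧ ∃ u : M, q = Ideal.torsionOf A M u := by
  simp only [AssociatedPrimes.mem_iff, isAssociatedPrime_iff, Ideal.ext_iff,
    Submodule.mem_colon_singleton, Submodule.mem_bot, Ideal.mem_torsionOf_iff]

lemma minimalPrimes_torsionOf_subset_associatedPrimes (u : M) :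
    (Ideal.torsionOf A M u).minimalPrimes ⊆ associatedPrimes A M := by
  intro q hq
  rw [← Ideal.annihilator_quotient (I := Ideal.torsionOf A M u)] at hq
  refine associatedPrimes.subset_of_injective
    (f := (Submodule.span A {u}).subtype ∘ₗ
      (Ideal.quotTorsionOfEquivSpanSingleton A M u).toLinearMap)
    ((Submodule.subtype_injective _).comp (LinearEquiv.injective _)) ?_
  exact Module.associatedPrimes.minimalPrimes_annihilator_subset_associatedPrimes _ _ hq

lemma powerTorsion_le_of_forall_associatedPrimes
    (h : ∀ q ∈ associatedPrimes A M, J ≤ q → I ≤ q) : powerTorsion J M ≤ powerTorsion I M := by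
  intro u hu
  change I ≤ (Ideal.torsionOf A M u).radical
  rw [← Ideal.sInf_minimalPrimes]
  exact le_sInf fun q hq => h q (minimalPrimes_torsionOf_subset_associatedPrimes u hq)
    (le_trans hu (hq.1.1.radical_le_iff.2 hq.1.2))

/-- Such a prime `q = ann (f w)` is minimal over `ann w`. -/
lemma mem_associatedPrimes_of_ker_le_powerTorsion {f : M →ₗ[A] N}
    (hf : LinearMap.ker f ≤ powerTorsion I M) (hq : q.IsPrime) (hIq : ¬ I ≤ q) {w : M}
    (hw : q = Ideal.torsionOf A N (f w)) : q ∈ associatedPrimes A M := by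
  refine minimalPrimes_torsionOf_subset_associatedPrimes w ⟨⟨hq, fun a ha => ?_⟩,
    fun p ⟨hp, hwp⟩ hpq a ha => ?_⟩
  · rw [hw, Ideal.mem_torsionOf_iff, ← map_smul, (Ideal.mem_torsionOf_iff w a).1 ha, map_zero]
  · obtain ⟨s, hs, hsq⟩ := SetLike.not_le_iff_exists.1 hIq
    rw [hw, Ideal.mem_torsionOf_iff, ← map_smul] at ha
    obtain ⟨k, hk⟩ := exists_pow_smul_eq_zero (hf ha) hs
    rw [smul_smul] at hk
    exact (hp.mem_or_mem (hwp hk)).resolve_left fun h => hsq (hpq (hp.mem_of_pow_mem k h))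

end AssociatedPrimes

section FilterRegular

/-- `M` is filter-regular along the list `y₁, …, y_r` with respect to the ideal `I`: the kernel of
`T → T_{yᵢ}`, where `T` is the top local cohomology of `M` along `y₁, …, yᵢ₋₁`, consists of
`I`-power torsion elements. -/
def FilterRegular {A : Type u} [CommRing A] (I : Ideal A) :
    List A → (M : Type u) → [AddCommGroup M] → [Module A M] → Prop
  | [], _, _, _ => True
  | y :: ys, M, _, _ => powerTorsion (Ideal.span {y}) M ≤ powerTorsion I M ∧
      FilterRegular I ys (CechQuotient y M)

variable {A : Type u} [CommRing A] {I : Ideal A}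
  {M N B : Type u} [AddCommGroup M] [Module A M] [AddCommGroup N] [Module A N]
  [AddCommGroup B] [Module A B]

lemma FilterRegular.concat {ys : List A} {y : A} (h : FilterRegular I ys M)
    (hy : powerTorsion (Ideal.span {y}) (TopCohomology ys M) ≤
      powerTorsion I (TopCohomology ys M)) : FilterRegular I (ys ++ [y]) M := by
  induction ys generalizing M with
  | nil => exact ⟨hy, trivial⟩
  | cons x ys ih => exact ⟨h.1, ih h.2 hy⟩

lemma mem_powerTorsion_of_map_mem {f : M →ₗ[A] N} (hf : LinearMap.ker f ≤ powerTorsion I M)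
    {u : M} (hu : f u ∈ powerTorsion I N) : u ∈ powerTorsion I M := by
  intro a ha
  obtain ⟨k, hk⟩ := exists_pow_smul_eq_zero hu ha
  rw [← map_smul] at hk
  obtain ⟨l, hl⟩ := exists_pow_smul_eq_zero (hf hk) ha
  exact ⟨l + k, by rw [Ideal.mem_torsionOf_iff, pow_add, mul_smul, hl]⟩

lemma CechQuotient.ker_map_le_powerTorsion {y : A} {f : N →ₗ[A] M} {g : M →ₗ[A] B}
    (h : Function.Exact f g) (hf : LinearMap.ker f ≤ powerTorsion I N)
    (hB : powerTorsion (Ideal.span {y}) B ≤ powerTorsion I B) :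
    LinearMap.ker (map y f) ≤ powerTorsion I (CechQuotient y N) := by
  intro l hl a ha
  obtain ⟨k, n, rfl⟩ := exists_frac l
  rw [LinearMap.mem_ker, map_frac, frac_eq_zero_iff] at hl
  obtain ⟨m, hm⟩ := hl
  obtain ⟨j, hj⟩ := mem_powerTorsion_span_singleton.1 hm
  have hgm : g m ∈ powerTorsion (Ideal.span {y}) B := by
    refine mem_powerTorsion_span_singleton.2 ⟨j + k, ?_⟩
    rw [smul_sub, sub_eq_zero, ← map_smul, smul_smul, ← pow_add] at hj
    rw [← map_smul, ← hj, h.apply_apply_eq_zero]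
  obtain ⟨r, hr⟩ := exists_pow_smul_eq_zero (hB hgm) ha
  rw [← map_smul] at hr
  obtain ⟨n', hn'⟩ := (h _).1 hr
  have hker : y ^ j • (a ^ r • n - y ^ k • n') ∈ LinearMap.ker f := by
    rw [LinearMap.mem_ker, map_smul, map_sub, map_smul, map_smul, hn', smul_comm (y ^ k),
      ← smul_sub, smul_comm, hj, smul_zero]
  obtain ⟨s, hs⟩ := exists_pow_smul_eq_zero (hf hker) ha
  refine ⟨s + r, ?_⟩
  rw [Ideal.mem_torsionOf_iff, ← map_smul, frac_eq_zero_iff]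
  refine ⟨a ^ s • n', mem_powerTorsion_span_singleton.2 ⟨j, ?_⟩⟩
  rw [← hs, pow_add, mul_smul, smul_comm (y ^ k), ← smul_sub, smul_comm]

lemma TopCohomology.ker_map_le_powerTorsion {ys : List A} {f : N →ₗ[A] M} {g : M →ₗ[A] B}
    (h : Function.Exact f g) (hg : Function.Surjective g)
    (hf : LinearMap.ker f ≤ powerTorsion I N) (hB : FilterRegular I ys B) :
    LinearMap.ker (map ys f) ≤ powerTorsion I (TopCohomology ys N) := by
  induction ys generalizing N M B with
  | nil => exact hf
  | cons y ys ih =>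
    exact ih (CechQuotient.map_exact h hg) (CechQuotient.map_surjective hg)
      (CechQuotient.ker_map_le_powerTorsion h hf hB.1) hB.2

lemma FilterRegular.of_exact {ys : List A} {f : N →ₗ[A] M} {g : M →ₗ[A] B}
    (h : Function.Exact f g) (hg : Function.Surjective g)
    (hf : LinearMap.ker f ≤ powerTorsion I N) (hM : FilterRegular I ys M)
    (hB : FilterRegular I ys B) : FilterRegular I ys N := by
  induction ys generalizing N M B with
  | nil => trivial
  | cons y ys ih =>
    exact ⟨fun u hu => mem_powerTorsion_of_map_mem hf (hM.1 (map_mem_powerTorsion f hu)),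
      ih (CechQuotient.map_exact h hg) (CechQuotient.map_surjective hg)
        (CechQuotient.ker_map_le_powerTorsion h hf hB.1) hM.2 hB.2⟩

end FilterRegular

section TorsionBy

variable {A : Type u} [CommRing A] {I : Ideal A} {y : A} {ys : List A}
  {M : Type u} [AddCommGroup M] [Module A M]

variable (y M) in
lemma CechQuotient.exact_torsionBy_subtype :
    Function.Exact (Submodule.torsionBy A (CechQuotient y M) y).subtype
      (y • (LinearMap.id : CechQuotient y M →ₗ[A] CechQuotient y M)) :=
  fun l => (Submodule.mem_torsionBy_iff y l).symm.trans (by simp)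

instance [IsNoetherianRing A] [Module.Finite A M] :
    Module.Finite A (Submodule.torsionBy A (CechQuotient y M) y) :=
  Module.Finite.of_injective (Submodule.inclusion fun _ hl => CechQuotient.mem_range_frac_one
    ((Submodule.mem_torsionBy_iff y _).1 hl)) (Submodule.inclusion_injective _)

lemma FilterRegular.torsionBy (h : FilterRegular I (y :: ys) M) :
    FilterRegular I ys (Submodule.torsionBy A (CechQuotient y M) y) :=
  .of_exact (CechQuotient.exact_torsionBy_subtype y M) CechQuotient.smul_surjective
    (by simp) h.2 h.2

lemma FilterRegular.ker_map_torsionBy_le (h : FilterRegular I (y :: ys) M) :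
    LinearMap.ker (TopCohomology.map ys (Submodule.torsionBy A (CechQuotient y M) y).subtype) ≤
      powerTorsion I _ :=
  TopCohomology.ker_map_le_powerTorsion (CechQuotient.exact_torsionBy_subtype y M)
    CechQuotient.smul_surjective (by simp) h.2

variable (ys) in
lemma TopCohomology.mem_range_map_torsionBy {u : TopCohomology ys (CechQuotient y M)}
    (hu : y • u = 0) :
    u ∈ LinearMap.range (map ys (Submodule.torsionBy A (CechQuotient y M) y).subtype) := by
  refine (map_exact ys (CechQuotient.exact_torsionBy_subtype y M)
    CechQuotient.smul_surjective u).1 ?_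
  rwa [map_smul_id]

lemma FilterRegular.finite_associatedPrimes [IsNoetherianRing A] [Module.Finite A M]
    (h : FilterRegular I ys M) :
    {q ∈ associatedPrimes A (TopCohomology ys M) | ¬ I ≤ q}.Finite := by
  induction ys generalizing M with
  | nil => exact (associatedPrimes.finite A M).subset fun q hq => hq.1
  | cons y ys ih =>
    refine (ih h.torsionBy).subset fun q ⟨hq, hIq⟩ => ⟨?_, hIq⟩
    obtain ⟨hqp, u, hu⟩ := mem_associatedPrimes_iff_eq_torsionOf.1 hq
    have hyq : y ∈ q := by
      have hy_torsion : u ∈ powerTorsion (Ideal.ofList (y :: ys)) (TopCohomology (y :: ys) M) :=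
        TopCohomology.powerTorsion_ofList_eq_top (y :: ys) (M := M) ▸ Submodule.mem_top
      rw [← hqp.radical, hu]
      exact hy_torsion (Ideal.subset_span List.mem_cons_self)
    obtain ⟨w, rfl⟩ := TopCohomology.mem_range_map_torsionBy ys
      (by rwa [hu, Ideal.mem_torsionOf_iff] at hyq)
    exact mem_associatedPrimes_of_ker_le_powerTorsion h.ker_map_torsionBy_le hqp hIq hu

end TorsionBy

section FilterRegularChoice

variable {A : Type u} [CommRing A] [IsNoetherianRing A] {I J : Ideal A}
  {M : Type u} [AddCommGroup M] [Module A M] [Module.Finite A M]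

theorem exists_elementaryEquiv_filterRegular (hI : I ≤ Module.annihilator A M) (xs : List A) (z : A)
    (hJ : J ≤ (I ⊔ Ideal.ofList (xs ++ [z])).radical) :
    ∃ ys, ElementaryEquiv (xs ++ [z]) (ys ++ [z]) ∧ FilterRegular J ys M := by
  refine ElementaryEquiv.exists_of_avoidance xs z (FilterRegular J · M) trivial fun ys hys => ?_
  refine ⟨_, hys.finite_associatedPrimes, fun q ⟨hq, hJq⟩ => ⟨hq.isPrime, fun hle => hJq ?_⟩,
    fun y hy => hys.concat (powerTorsion_le_of_forall_associatedPrimes fun q hq hyq => ?_)⟩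
  · refine hJ.trans (hq.isPrime.radical_le_iff.2 (sup_le (hI.trans ?_) hle))
    exact (TopCohomology.annihilator_le_annihilator M ys).trans
      (Submodule.annihilator_top.ge.trans hq.annihilator_le)
  · exact by_contra fun hJq => hy q ⟨hq, hJq⟩ (hyq (Ideal.mem_span_singleton_self y))

end FilterRegularChoice

section InjectiveHull

variable {A : Type u} [CommRing A] {F : Type u} [AddCommGroup F] [Module A F]
  {N E K : Submodule A F}

/-- The submodule `E` is an essential extension of `N`: each nonzero submodule of `E` meets `N`. -/
def IsEssentialOver (E N : Submodule A F) : Prop := ∀ L ≤ E, Disjoint L N → L = ⊥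

lemma IsEssentialOver.trans (h : IsEssentialOver K E) (hE : IsEssentialOver E N) :
    IsEssentialOver K N := fun L hL hLN => h L hL <| disjoint_iff.2 <|
  hE _ inf_le_right (hLN.mono_left inf_le_left)

lemma IsEssentialOver.range_le_of_isSimpleModule (h : IsEssentialOver E N) {S : Type*}
    [AddCommGroup S] [Module A S] [IsSimpleModule A S] (f : S →ₗ[A] E) :
    LinearMap.range (E.subtype ∘ₗ f) ≤ N := by
  obtain hf | hf := (E.subtype ∘ₗ f).injective_or_eq_zero
  · have hatom : IsAtom (LinearMap.range (E.subtype ∘ₗ f)) :=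
      isSimpleModule_iff_isAtom.1 (IsSimpleModule.congr (LinearEquiv.ofInjective _ hf).symm)
    refine hatom.not_disjoint_iff_le.1 fun hdisj => hatom.1 (h _ ?_ hdisj)
    rintro _ ⟨a, rfl⟩
    exact (f a).2
  · rw [hf, LinearMap.range_zero]
    exact bot_le

variable (N) in
lemma exists_maximal_isEssentialOver :
    ∃ E, N ≤ E ∧ Maximal (IsEssentialOver · N) E := by
  refine zorn_le_nonempty₀ {E | IsEssentialOver E N} (fun c hc hchain _ _ =>
    ⟨sSup c, fun L hL hLN => ?_, fun K hK => le_sSup hK⟩) N fun L hL hLN => hLN.eq_bot_of_le hL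
  rw [← inf_eq_left.2 hL, ← disjoint_iff, hchain.directedOn.disjoint_sSup_right]
  exact fun K hK => disjoint_iff.2 (hc hK _ inf_le_right (hLN.mono_left inf_le_left))

variable (E) in
lemma exists_maximal_disjoint : ∃ L, Maximal (Disjoint · E) L := by
  obtain ⟨L, -, hL⟩ := zorn_le_nonempty₀ {L | Disjoint L E} (fun c hc hchain _ _ =>
    ⟨sSup c, hchain.directedOn.disjoint_sSup_left.2 hc, fun K hK => le_sSup hK⟩) ⊥ disjoint_bot_left
  exact ⟨L, hL⟩

lemma isEssentialOver_range_of_maximal_disjoint {L : Submodule A F} (hL : Maximal (Disjoint · E) L)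
    {ψ : F ⧸ L →ₗ[A] F} (hψ : ∀ e ∈ E, ψ (L.mkQ e) = e) :
    IsEssentialOver (LinearMap.range ψ) E := by
  intro K hK hKE
  rw [← LinearMap.range_comp_of_range_eq_top ψ (Submodule.range_mkQ L)] at hK
  have hL_le : L ≤ K.comap (ψ ∘ₗ L.mkQ) := fun l hl => by
    simp [(Submodule.Quotient.mk_eq_zero L).2 hl]
  have hdisj : Disjoint (K.comap (ψ ∘ₗ L.mkQ)) E := by
    refine Submodule.disjoint_def.2 fun e heK heE => Submodule.disjoint_def.1 hKE e ?_ heE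
    rwa [Submodule.mem_comap, LinearMap.comp_apply, hψ e heE] at heK
  rw [← Submodule.map_comap_eq_of_le hK, eq_bot_iff, Submodule.map_le_iff_le_comap]
  refine (hL.le_of_ge hdisj hL_le).trans fun l hl => ?_
  simp [(Submodule.Quotient.mk_eq_zero L).2 hl]

/-- A maximal essential extension of `N` in an injective module is a direct summand. -/
theorem exists_injective_isEssentialOver (hF : Module.Injective A F) (N : Submodule A F) :
    ∃ E : Submodule A F, N ≤ E ∧ IsEssentialOver E N ∧ Module.Injective A E := by
  obtain ⟨E, hNE, hE⟩ := exists_maximal_isEssentialOver N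
  obtain ⟨L, hL⟩ := exists_maximal_disjoint E
  have hinj : Function.Injective (L.mkQ ∘ₗ E.subtype) := by
    rw [← LinearMap.ker_eq_bot, LinearMap.ker_comp, Submodule.ker_mkQ,
      ← Submodule.disjoint_iff_comap_eq_bot]
    exact hL.prop.symm
  obtain ⟨ψ, hψ⟩ := hF.out (L.mkQ ∘ₗ E.subtype) hinj E.subtype
  replace hψ : ∀ e ∈ E, ψ (L.mkQ e) = e := fun e he => hψ ⟨e, he⟩
  have hrange : LinearMap.range ψ ≤ E :=
    hE.le_of_ge ((isEssentialOver_range_of_maximal_disjoint hL hψ).trans hE.prop)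
      fun e he => ⟨L.mkQ e, hψ e he⟩
  refine ⟨E, hNE, hE.prop, ⟨fun X Y _ _ _ _ f hf g => ?_⟩⟩
  obtain ⟨h, hh⟩ := hF.out f hf (E.subtype ∘ₗ g)
  refine ⟨(ψ ∘ₗ L.mkQ ∘ₗ h).codRestrict E fun y => hrange ⟨_, rfl⟩, fun x => Subtype.ext ?_⟩
  exact (congrArg (ψ ∘ₗ L.mkQ) (hh x)).trans (hψ _ (g x).2)

end InjectiveHull

section ResidueDualizing

variable (A : Type u) [CommRing A] [IsLocalRing A]

/-- The properties of the injective hull `E` of the residue field on which the Matlis duality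
`Hom(-, E)` rests. -/
structure IsResidueDualizing (E : Type u) [AddCommGroup E] [Module A E] : Prop where
  injective : Module.Injective A E
  nontrivial_dual : Nontrivial ((A ⧸ maximalIdeal A) →ₗ[A] E)
  finite_dual : Module.Finite A ((A ⧸ maximalIdeal A) →ₗ[A] E)

theorem exists_isResidueDualizing :
    ∃ (E : Type u) (_ : AddCommGroup E) (_ : Module A E), IsResidueDualizing A E := by
  obtain ⟨⟨F, hF, i, hi⟩⟩ := CategoryTheory.EnoughInjectives.presentation
    (ModuleCat.of A (A ⧸ maximalIdeal A))
  obtain ⟨E, hE, hess, hinj⟩ := exists_injective_isEssentialOver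
    (Module.injective_module_of_injective_object A F) (LinearMap.range i.hom)
  have hi_inj : Function.Injective i.hom := (ModuleCat.mono_iff_injective i).1 hi
  let j : (A ⧸ maximalIdeal A) →ₗ[A] E := i.hom.codRestrict E fun a => hE ⟨a, rfl⟩
  have hj : j ≠ 0 := fun h => one_ne_zero (α := A ⧸ maximalIdeal A) <| hi_inj <|
    (congrArg Subtype.val (LinearMap.congr_fun h 1)).trans (map_zero i.hom).symm
  refine ⟨E, inferInstance, inferInstance, hinj, ⟨j, 0, hj⟩, ⟨{j}, eq_top_iff.2 fun f _ => ?_⟩⟩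
  rw [Finset.coe_singleton, Submodule.mem_span_singleton]
  have : IsSimpleModule A (A ⧸ maximalIdeal A) :=
    isSimpleModule_iff_isCoatom.2 (maximalIdeal.isMaximal A).out
  obtain ⟨b, hb⟩ := hess.range_le_of_isSimpleModule f ⟨1, rfl⟩
  obtain ⟨c, rfl⟩ := Ideal.Quotient.mk_surjective b
  refine ⟨c, Submodule.linearMap_qext _ (LinearMap.ext_ring (Subtype.ext ?_))⟩
  rw [← mul_one (Ideal.Quotient.mk _ c), ← Ideal.Quotient.algebraMap_eq, ← Algebra.smul_def,
    map_smul] at hb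
  exact hb

end ResidueDualizing

section Duality

variable {A : Type u} [CommRing A] {I : Ideal A}

lemma le_of_mem_support_of_powerTorsion_eq_top {M : Type*} [AddCommGroup M] [Module A M]
    (h : powerTorsion I M = ⊤) {p : PrimeSpectrum A} (hp : p ∈ Module.support A M) :
    I ≤ p.asIdeal := by
  obtain ⟨u, hu⟩ := Module.mem_support_iff_exists_annihilator.1 hp
  refine (show u ∈ powerTorsion I M from h ▸ Submodule.mem_top).trans
    (p.isPrime.radical_le_iff.2 fun a ha => hu ?_)
  rwa [Submodule.mem_annihilator_span_singleton]

lemma support_dual_subset (M E : Type*) [AddCommGroup M] [Module A M] [Module.Finite A M]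
    [AddCommGroup E] [Module A E] : Module.support A (M →ₗ[A] E) ⊆ Module.support A M := by
  intro p hp
  rw [Module.support_eq_zeroLocus]
  refine le_trans (fun a ha => Module.mem_annihilator.2 fun f => LinearMap.ext fun u => ?_)
    (Module.annihilator_le_of_mem_support hp)
  rw [LinearMap.smul_apply, ← map_smul, Module.mem_annihilator.1 ha, map_zero, LinearMap.zero_apply]

lemma isHausdorff_dual {H E : Type*} [AddCommGroup H] [Module A H] [AddCommGroup E] [Module A E]
    (hI : I.FG) (hH : powerTorsion I H = ⊤) : IsHausdorff I (H →ₗ[A] E) := by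
  refine ⟨fun f hf => LinearMap.ext fun u => ?_⟩
  obtain ⟨n, hn⟩ := Ideal.exists_pow_le_of_le_radical_of_fg
    (show u ∈ powerTorsion I H from hH ▸ Submodule.mem_top) hI
  have hle : (I ^ n • ⊤ : Submodule A (H →ₗ[A] E)) ≤ LinearMap.ker (LinearMap.applyₗ u) := by
    refine Submodule.smul_le.2 fun a ha g _ => ?_
    rw [LinearMap.mem_ker, LinearMap.applyₗ_apply_apply, LinearMap.smul_apply, ← map_smul,
      (Ideal.mem_torsionOf_iff u a).1 (hn ha), map_zero]
  exact hle (SModEq.zero.1 (hf n))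

lemma isPrecomplete_pi (I : Ideal A) [IsPrecomplete I A] (n : ℕ) :
    IsPrecomplete I (Fin n → A) := by
  rw [← AdicCompletion.of_surjective_iff]
  intro z
  choose r hr using fun i => AdicCompletion.of_surjective I A (AdicCompletion.piEquivFin I n z i)
  refine ⟨r, (AdicCompletion.piEquivFin I n).injective (funext fun i => ?_)⟩
  rw [← hr, AdicCompletion.piEquivFin_apply]
  rfl

/-- Nakayama's lemma over a complete ring. -/
theorem finite_of_finite_quotient_smul_top [IsPrecomplete I A] {K : Type*} [AddCommGroup K]
    [Module A K] [IsHausdorff I K] (h : Module.Finite A (K ⧸ (I • ⊤ : Submodule A K))) :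
    Module.Finite A K := by
  obtain ⟨n, s, hs⟩ := Module.Finite.exists_fin (R := A) (M := K ⧸ (I • ⊤ : Submodule A K))
  choose r hr using fun i => Submodule.mkQ_surjective _ (s i)
  have := isPrecomplete_pi I n
  refine .of_surjective (Fintype.linearCombination A r)
    (surjective_of_mkQ_comp_surjective (I := I) ?_)
  rw [← LinearMap.range_eq_top, ← top_le_iff, ← hs, Submodule.span_le]
  rintro _ ⟨i, rfl⟩
  exact ⟨Pi.single i 1, by simp [Fintype.linearCombination_apply_single, ← hr]⟩

lemma exists_comp_eq_of_ker_le {M N : Type*} [AddCommGroup M] [Module A M] [AddCommGroup N]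
    [Module A N] {E : Type u} [AddCommGroup E] [Module A E] (hE : Module.Injective A E)
    {f : M →ₗ[A] N} {φ : M →ₗ[A] E} (h : LinearMap.ker f ≤ LinearMap.ker φ) :
    ∃ ψ : N →ₗ[A] E, ψ ∘ₗ f = φ := by
  obtain ⟨ψ, hψ⟩ := Module.Injective.extension_property A E _ _
    ((LinearMap.ker f).liftQ f le_rfl)
    (LinearMap.ker_eq_bot.1 (Submodule.ker_liftQ_eq_bot' _ _ rfl)) ((LinearMap.ker f).liftQ φ h)
  refine ⟨ψ, LinearMap.ext fun u => ?_⟩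
  exact LinearMap.congr_fun hψ (Submodule.Quotient.mk u)

section RangeContainsTorsion

variable {G H : Type*} [AddCommGroup G] [Module A G] [AddCommGroup H] [Module A H] {E : Type u}
  [AddCommGroup E] [Module A E] {y : A} {r : G →ₗ[A] H}

/-- If `r` hits all elements killed by `y`, then a form vanishing on the range of `r` factors
through multiplication by `y`. -/
lemma ker_lcomp_le_span_singleton_smul_top (hE : Module.Injective A E)
    (hr : ∀ u, y • u = 0 → u ∈ LinearMap.range r) :
    LinearMap.ker (LinearMap.lcomp A E r) ≤ Ideal.span {y} • ⊤ := by
  intro φ hφ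
  have hker : LinearMap.ker (y • LinearMap.id : H →ₗ[A] H) ≤ LinearMap.ker φ := by
    intro u hu
    obtain ⟨w, rfl⟩ := hr u hu
    exact LinearMap.congr_fun hφ w
  obtain ⟨ψ, rfl⟩ := exists_comp_eq_of_ker_le hE hker
  rw [LinearMap.comp_smul, LinearMap.comp_id]
  exact Submodule.smul_mem_smul (Ideal.mem_span_singleton_self y) trivial

lemma finite_dual_of_range_contains_torsion [IsNoetherianRing A] [IsPrecomplete I A]
    (hE : Module.Injective A E) (hr : ∀ u, y • u = 0 → u ∈ LinearMap.range r) (hy : y ∈ I)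
    (hH : powerTorsion I H = ⊤) [Module.Finite A (G →ₗ[A] E)] : Module.Finite A (H →ₗ[A] E) := by
  have := isHausdorff_dual (E := E) (IsNoetherian.noetherian I) hH
  have : Module.Finite A ((H →ₗ[A] E) ⧸ LinearMap.ker (LinearMap.lcomp A E r)) :=
    .equiv (LinearMap.lcomp A E r).quotKerEquivRange.symm
  refine finite_of_finite_quotient_smul_top (I := I) (.of_surjective (Submodule.factor
    ((ker_lcomp_le_span_singleton_smul_top hE hr).trans (Submodule.smul_mono_left ?_)))
    (Submodule.factor_surjective _))
  exact (Ideal.span_singleton_le_iff_mem _).2 hy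

lemma mem_support_dual_of_range_contains_torsion [Module.Finite A (H →ₗ[A] E)]
    (hE : Module.Injective A E) (hr : ∀ u, y • u = 0 → u ∈ LinearMap.range r)
    {p : PrimeSpectrum A} (hp : p ∈ Module.support A (H →ₗ[A] E)) (hyp : y ∈ p.asIdeal) :
    p ∈ Module.support A (G →ₗ[A] E) := by
  have hquot : p ∈ Module.support A ((H →ₗ[A] E) ⧸
      (Ideal.span {y} • ⊤ : Submodule A (H →ₗ[A] E))) := by
    rw [Module.support_quotient]
    exact ⟨hp, (Ideal.span_singleton_le_iff_mem _).2 hyp⟩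
  have hker := Module.support_subset_of_surjective _
    (Submodule.factor_surjective (ker_lcomp_le_span_singleton_smul_top hE hr)) hquot
  rw [(LinearMap.lcomp A E r).quotKerEquivRange.support_eq] at hker
  exact Module.support_subset_of_injective _ (Submodule.subtype_injective _) hker

end RangeContainsTorsion

variable [IsLocalRing A] {E : Type u} [AddCommGroup E] [Module A E]

lemma IsResidueDualizing.finite_dual_of_linearEquiv (hE : IsResidueDualizing A E)
    {N : Type*} [AddCommGroup N] [Module A N] {p : PrimeSpectrum A} (e : N ≃ₗ[A] A ⧸ p.asIdeal)
    (hN : powerTorsion (maximalIdeal A) N = ⊤) : Module.Finite A (N →ₗ[A] E) := by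
  have hp : p ∈ Module.support A N := by
    rw [e.support_eq, Module.support_eq_zeroLocus, Ideal.annihilator_quotient]
    exact (PrimeSpectrum.mem_zeroLocus ..).2 le_rfl
  have hpm : p.asIdeal = maximalIdeal A := le_antisymm (le_maximalIdeal p.isPrime.ne_top)
    (le_of_mem_support_of_powerTorsion_eq_top hN hp)
  rw [hpm] at e
  have := hE.finite_dual
  exact .equiv (LinearEquiv.congrLeft E A e).symm

variable [IsNoetherianRing A]

theorem IsResidueDualizing.finite_dual_of_powerTorsion_eq_top (hE : IsResidueDualizing A E)
    {H : Type u} [AddCommGroup H] [Module A H] [hfin : Module.Finite A H]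
    (hH : powerTorsion (maximalIdeal A) H = ⊤) : Module.Finite A (H →ₗ[A] E) := by
  revert hH
  induction hfin using IsNoetherianRing.induction_on_isQuotientEquivQuotientPrime A with
  | subsingleton N => exact fun _ => inferInstance
  | quotient N p e => exact hE.finite_dual_of_linearEquiv e
  | exact N₁ N₂ N₃ f g hf hg hfg ih₁ ih₃ =>
    intro hN
    have := ih₁ (eq_top_iff.2 fun u _ => mem_powerTorsion_of_map_mem
      (by rw [LinearMap.ker_eq_bot.2 hf]; exact bot_le) (hN ▸ Submodule.mem_top : f u ∈ _))
    have := ih₃ (powerTorsion_eq_top_of_surjective hg hN)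
    have := hE.injective
    exact Module.Finite.of_exact (LinearMap.exact_lcomp_of_exact_of_surjective E hfg hg)
      fun φ => Module.Injective.extension_property A E _ _ f hf φ

lemma IsResidueDualizing.dual_powerTorsion (hE : IsResidueDualizing A E) (M : Type u)
    [AddCommGroup M] [Module A M] [Module.Finite A M] :
    Module.Finite A (powerTorsion (maximalIdeal A) M →ₗ[A] E) ∧
      ∀ p ∈ Module.support A (powerTorsion (maximalIdeal A) M →ₗ[A] E),
        maximalIdeal A ≤ p.asIdeal :=
  ⟨hE.finite_dual_of_powerTorsion_eq_top (powerTorsion_powerTorsion _ _), fun _ hp =>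
    le_of_mem_support_of_powerTorsion_eq_top (powerTorsion_powerTorsion _ _)
      (support_dual_subset _ E hp)⟩

/-- The induction on `ys` shows that for the dual `K` the quotient `K / yK` is a subquotient of the
corresponding dual of the module `(0 : y)` in `M_y / M`, along the remaining elements. -/
theorem IsResidueDualizing.dual_powerTorsion_topCohomology [IsPrecomplete (maximalIdeal A) A]
    (hE : IsResidueDualizing A E) {ys : List A} (hys : ∀ y ∈ ys, y ∈ maximalIdeal A) {M : Type u}
    [AddCommGroup M] [Module A M] [Module.Finite A M]
    (h : FilterRegular (maximalIdeal A) ys M) :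
    Module.Finite A (powerTorsion (maximalIdeal A) (TopCohomology ys M) →ₗ[A] E) ∧
      ∀ p ∈ Module.support A (powerTorsion (maximalIdeal A) (TopCohomology ys M) →ₗ[A] E),
        Ideal.ofList ys ≤ p.asIdeal → maximalIdeal A ≤ p.asIdeal := by
  induction ys generalizing M with
  | nil => exact (hE.dual_powerTorsion M).imp_right fun h p hp _ => h p hp
  | cons y ys ih =>
    obtain ⟨hym, hys⟩ := List.forall_mem_cons.1 hys
    obtain ⟨hfin, hsupp⟩ := ih hys h.torsionBy
    let j := TopCohomology.map ys (Submodule.torsionBy A (CechQuotient y M) y).subtype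
    let r : powerTorsion (maximalIdeal A) (TopCohomology ys _) →ₗ[A]
        powerTorsion (maximalIdeal A) (TopCohomology (y :: ys) M) :=
      j.restrict fun _ hu => map_mem_powerTorsion j hu
    have hr : ∀ u, y • u = 0 → u ∈ LinearMap.range r := by
      intro u hu
      obtain ⟨w, hw⟩ := TopCohomology.mem_range_map_torsionBy ys (congrArg Subtype.val hu)
      exact ⟨⟨w, mem_powerTorsion_of_map_mem h.ker_map_torsionBy_le (hw ▸ u.2)⟩, Subtype.ext hw⟩
    have := finite_dual_of_range_contains_torsion hE.injective hr hym
      (powerTorsion_powerTorsion _ _)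
    refine ⟨this, fun p hp hyp => ?_⟩
    rw [Ideal.ofList_cons, sup_le_iff, Ideal.span_singleton_le_iff_mem] at hyp
    exact hsupp p (mem_support_dual_of_range_contains_torsion hE.injective hr hp hyp.1) hyp.2

end Duality

section ParameterList

variable {A : Type*} [CommRing A] [IsLocalRing A] {I : Ideal A} {xs ys : List A}

/-- The list `xs` is a system of parameters of the local ring `A ⧸ I`. -/
structure IsParameterList (I : Ideal A) (xs : List A) : Prop where
  mem : ∀ x ∈ xs, x ∈ maximalIdeal A
  le_radical : maximalIdeal A ≤ (I ⊔ Ideal.ofList xs).radical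
  ringKrullDim_eq : ringKrullDim (A ⧸ I) = xs.length

namespace IsParameterList

lemma of_elementaryEquiv (h : IsParameterList I xs) (e : ElementaryEquiv xs ys) :
    IsParameterList I ys where
  mem _ hy := Ideal.span_le.2 h.mem (e.ofList_eq.ge (Ideal.subset_span hy))
  le_radical := e.ofList_eq ▸ h.le_radical
  ringKrullDim_eq := e.length_eq ▸ h.ringKrullDim_eq

lemma exists_isPrime_of_concat [IsNoetherianRing A] {z : A} (h : IsParameterList I (ys ++ [z])) :
    ∃ P : Ideal A, P.IsPrime ∧ I ≤ P ∧ z ∈ P ∧ IsParameterList P ys := by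
  have hmem := List.forall_mem_append.1 h.mem
  have hdim : ys.length ≤ ringKrullDim (A ⧸ (I ⊔ Ideal.span {z})) := by
    refine ENat.WithBot.add_le_add_one_right_iff.1 ?_
    have := ringKrullDim_quotient_le_sup_span_add_one (I := I) (hmem.2 z (by simp))
    rwa [h.ringKrullDim_eq, List.length_append, List.length_singleton, Nat.cast_add,
      Nat.cast_one] at this
  rw [ringKrullDim_quotient] at hdim
  obtain ⟨l, hl⟩ := Order.le_krullDim_iff.1 hdim
  let P := l.head.1.asIdeal
  have hIP : I ⊔ Ideal.span {z} ≤ P := l.head.2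
  have hm : maximalIdeal A ≤ (P ⊔ Ideal.ofList ys).radical := by
    refine h.le_radical.trans (Ideal.radical_mono ?_)
    rw [Ideal.ofList_append, Ideal.ofList_singleton, sup_comm (Ideal.ofList ys), ← sup_assoc]
    exact sup_le_sup_right hIP _
  refine ⟨P, l.head.1.isPrime, le_sup_left.trans hIP,
    hIP (Ideal.mem_sup_right (Ideal.mem_span_singleton_self z)), hmem.1, hm,
    (ringKrullDim_quotient_le_length hmem.1 hm).antisymm ?_⟩
  rw [ringKrullDim_quotient]
  exact Order.le_krullDim_iff.2
    ⟨⟨l.length, fun i => ⟨(l i).1, LTSeries.head_le l i⟩, l.step⟩, hl⟩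

end IsParameterList

end ParameterList

section DualOfTopCohomology

variable {A : Type u} [CommRing A] {E : Type u} [AddCommGroup E] [Module A E]

lemma associatedPrimes_dual_subset_of_surjective {G H : Type*} [AddCommGroup G] [Module A G]
    [AddCommGroup H] [Module A H] {r : G →ₗ[A] H} (hr : Function.Surjective r) :
    associatedPrimes A (H →ₗ[A] E) ⊆ associatedPrimes A (G →ₗ[A] E) :=
  associatedPrimes.subset_of_injective (f := LinearMap.lcomp A E r)
    (LinearMap.lcomp_injective_of_surjective r hr)

lemma exact_smul_id_factor (I : Ideal A) (a : A) :
    Function.Exact (a • (LinearMap.id : (A ⧸ I) →ₗ[A] (A ⧸ I)))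
      (Submodule.factor (le_sup_left : I ≤ I ⊔ Ideal.span {a})) := by
  rw [LinearMap.exact_iff, Submodule.ker_mapQ, Submodule.comap_id, Submodule.map_sup,
    Submodule.mkQ_map_self, bot_sup_eq, Ideal.span, Submodule.map_span, Set.image_singleton]
  ext w
  rw [Submodule.mem_span_singleton]
  refine ⟨fun ⟨b, hb⟩ => ⟨Submodule.mkQ I b, ?_⟩, fun ⟨v, hv⟩ => ?_⟩
  · rw [← hb, ← map_smul, smul_eq_mul, mul_comm, ← smul_eq_mul, map_smul]; rfl
  · obtain ⟨b, rfl⟩ := Submodule.mkQ_surjective I v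
    refine ⟨b, ?_⟩
    rw [← hv, ← map_smul, smul_eq_mul, mul_comm, ← smul_eq_mul, map_smul]; rfl

variable [IsLocalRing A]

lemma IsParameterList.powerTorsion_eq_top {P : Ideal A} {xs : List A}
    (h : IsParameterList P xs) :
    powerTorsion (maximalIdeal A) (TopCohomology xs (A ⧸ P)) = ⊤ :=
  top_le_iff.1 <| (TopCohomology.powerTorsion_sup_ofList_eq_top (M := A ⧸ P)
    Ideal.annihilator_quotient.ge xs).ge.trans (powerTorsion_anti h.le_radical)

variable [IsNoetherianRing A]

lemma IsResidueDualizing.nontrivial_dual_of_powerTorsion_eq_top (hE : IsResidueDualizing A E)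
    {H : Type*} [AddCommGroup H] [Module A H] [Nontrivial H]
    (hH : powerTorsion (maximalIdeal A) H = ⊤) : Nontrivial (H →ₗ[A] E) := by
  obtain ⟨q, hq⟩ := associatedPrimes.nonempty A H
  obtain ⟨hqp, u, rfl⟩ := mem_associatedPrimes_iff_eq_torsionOf.1 hq
  have hqm : Ideal.torsionOf A H u = maximalIdeal A :=
    (le_maximalIdeal hqp.ne_top).antisymm
      ((show u ∈ powerTorsion (maximalIdeal A) H from hH ▸ Submodule.mem_top).trans
        hqp.radical.le)
  have := hE.nontrivial_dual
  obtain ⟨φ, hφ⟩ := exists_ne (0 : (A ⧸ maximalIdeal A) →ₗ[A] E)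
  obtain ⟨ψ, hψ⟩ := exists_comp_eq_of_ker_le hE.injective
    (f := LinearMap.toSpanSingleton A H u) (φ := φ ∘ₗ (maximalIdeal A).mkQ)
    ((hqm.le.trans (Submodule.ker_mkQ _).ge).trans (LinearMap.ker_le_ker_comp _ _))
  refine ⟨ψ, 0, ?_⟩
  rintro rfl
  rw [LinearMap.zero_comp] at hψ
  exact hφ ((LinearMap.cancel_right (Submodule.mkQ_surjective _)).1
    (hψ.symm.trans (LinearMap.zero_comp _).symm))

namespace IsParameterList

variable {P : Ideal A} {xs : List A}

lemma smul_surjective (h : IsParameterList P xs) (hP : P.IsPrime) {a : A} (ha : a ∉ P) :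
    Function.Surjective (a • LinearMap.id : TopCohomology xs (A ⧸ P) →ₗ[A] _) := by
  have hdim : ringKrullDim (A ⧸ (P ⊔ Ideal.span {a})) < xs.length := by
    rw [← ENat.WithBot.add_one_le_natCast_iff, ← h.ringKrullDim_eq]
    refine ringKrullDim_quotient_sup_span_add_one_le fun q hq => ?_
    rw [Ideal.minimalPrimes_eq_subsingleton_self] at hq
    rwa [Set.mem_singleton_iff.1 hq]
  have := TopCohomology.subsingleton_of_ringKrullDim_lt_length hdim h.mem
    (h.le_radical.trans (Ideal.radical_mono (sup_le_sup_right le_sup_left _)))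
  rw [← TopCohomology.map_smul_id]
  exact fun u => (TopCohomology.map_exact xs (exact_smul_id_factor P a)
    (Submodule.factor_surjective _) u).1 (Subsingleton.elim _ _)

lemma torsionOf_dual_eq (h : IsParameterList P xs) (hP : P.IsPrime)
    {φ : TopCohomology xs (A ⧸ P) →ₗ[A] E} (hφ : φ ≠ 0) : Ideal.torsionOf A _ φ = P := by
  ext a
  rw [Ideal.mem_torsionOf_iff]
  refine ⟨fun ha => ?_, fun ha => LinearMap.ext fun u => ?_⟩
  · by_contra haP
    refine hφ (LinearMap.ext fun u => ?_)
    obtain ⟨w, rfl⟩ := h.smul_surjective hP haP u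
    exact (map_smul φ a w).trans (LinearMap.congr_fun ha w)
  · have ha' := TopCohomology.annihilator_le_annihilator (A ⧸ P) xs
      (Ideal.annihilator_quotient.ge ha)
    rw [LinearMap.smul_apply, ← map_smul, Module.mem_annihilator.1 ha', map_zero,
      LinearMap.zero_apply]

theorem mem_associatedPrimes_dual (h : IsParameterList P xs) (hP : P.IsPrime)
    (hE : IsResidueDualizing A E) [Nontrivial (TopCohomology xs (A ⧸ P))] :
    P ∈ associatedPrimes A (TopCohomology xs (A ⧸ P) →ₗ[A] E) := by
  have := hE.nontrivial_dual_of_powerTorsion_eq_top h.powerTorsion_eq_top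
  obtain ⟨φ, hφ⟩ := exists_ne (0 : TopCohomology xs (A ⧸ P) →ₗ[A] E)
  exact mem_associatedPrimes_iff_eq_torsionOf.2 ⟨hP, φ, (h.torsionOf_dual_eq hP hφ).symm⟩

end IsParameterList

end DualOfTopCohomology

section Nonvanishing

lemma CechQuotient.comp_subtype_surjective {A : Type*} [CommRing A] {M : Type*} {N : Type*}
    [AddCommGroup M] [Module A M] [AddCommGroup N] [Module A N] {z : A}
    [Subsingleton (CechQuotient z M)] {π : M →ₗ[A] N} (hπ : Function.Surjective π)
    (hz : z ∈ Module.annihilator A N) :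
    Function.Surjective (π ∘ₗ (powerTorsion (Ideal.span {z}) M).subtype) := by
  intro t
  obtain ⟨u, rfl⟩ := hπ t
  obtain ⟨m, hm⟩ := (frac_eq_zero_iff (y := z) (n := 1) (m := u)).1 (Subsingleton.elim _ _)
  refine ⟨⟨u - z ^ 1 • m, hm⟩, ?_⟩
  rw [LinearMap.comp_apply, Submodule.subtype_apply, map_sub, map_smul, pow_one,
    Module.mem_annihilator.1 hz, sub_zero]

lemma powerTorsion_quotient_eq_bot {A : Type*} [CommRing A] {I P : Ideal A} (hP : P.IsPrime)
    (hI : ¬ I ≤ P) : powerTorsion I (A ⧸ P) = ⊥ := by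
  refine eq_bot_iff.2 fun u hu => ?_
  obtain ⟨a, haI, haP⟩ := SetLike.not_le_iff_exists.1 hI
  obtain ⟨k, hk⟩ := exists_pow_smul_eq_zero hu haI
  obtain ⟨b, rfl⟩ := Ideal.Quotient.mk_surjective u
  have hab : Ideal.Quotient.mk P (a ^ k * b) = 0 := hk
  exact Ideal.Quotient.eq_zero_iff_mem.2 ((hP.mem_or_mem
    (Ideal.Quotient.eq_zero_iff_mem.1 hab)).resolve_left fun h => haP (hP.mem_of_pow_mem k h))

variable {A : Type u} [CommRing A] [IsLocalRing A] {I P : Ideal A} {xs ys : List A} {z : A}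

lemma TopCohomology.powerTorsion_span_singleton_eq_maximalIdeal {M : Type u} [AddCommGroup M]
    [Module A M] (hI : I ≤ Module.annihilator A M) (hz : z ∈ maximalIdeal A)
    (hm : maximalIdeal A ≤ (I ⊔ Ideal.ofList (ys ++ [z])).radical) :
    powerTorsion (Ideal.span {z}) (TopCohomology ys M) =
      powerTorsion (maximalIdeal A) (TopCohomology ys M) := by
  refine le_antisymm ?_
    (powerTorsion_anti (((Ideal.span_singleton_le_iff_mem _).2 hz).trans Ideal.le_radical))
  rw [Ideal.ofList_append, Ideal.ofList_singleton, ← sup_assoc] at hm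
  refine le_trans ?_ (powerTorsion_anti hm)
  rw [powerTorsion_sup, powerTorsion_sup_ofList_eq_top hI, top_inf_eq]

namespace IsParameterList

lemma eq_nil_of_maximalIdeal (h : IsParameterList (maximalIdeal A) xs) : xs = [] := by
  have hdim := h.ringKrullDim_eq
  rw [ringKrullDim_eq_zero_of_isField ((Ideal.Quotient.maximal_ideal_iff_isField_quotient _).1
    inferInstance)] at hdim
  exact List.length_eq_zero_iff.1 (by exact_mod_cast hdim.symm)

lemma exists_surjective_powerTorsion {P' : Ideal A} (h : IsParameterList P (ys ++ [z]))
    [Subsingleton (CechQuotient z (TopCohomology ys (A ⧸ P)))] (hP : P ≤ P') (hz : z ∈ P') :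
    ∃ ρ : powerTorsion (maximalIdeal A) (TopCohomology ys (A ⧸ P)) →ₗ[A]
      TopCohomology ys (A ⧸ P'), Function.Surjective ρ := by
  rw [← TopCohomology.powerTorsion_span_singleton_eq_maximalIdeal (M := A ⧸ P)
    Ideal.annihilator_quotient.ge (h.mem z (by simp)) h.le_radical]
  exact ⟨_, CechQuotient.comp_subtype_surjective
    (TopCohomology.map_surjective ys (Submodule.factor_surjective hP))
    (TopCohomology.annihilator_le_annihilator _ ys (Ideal.annihilator_quotient.ge hz))⟩

end IsParameterList

variable [IsNoetherianRing A] {E : Type u} [AddCommGroup E] [Module A E]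

section
variable [IsPrecomplete (maximalIdeal A) A] {M : Type u} [AddCommGroup M] [Module A M]
  [Module.Finite A M]

lemma IsResidueDualizing.maximalIdeal_le_radical_of_mem_associatedPrimes
    (hE : IsResidueDualizing A E) (hys : ∀ y ∈ ys, y ∈ maximalIdeal A)
    (h : FilterRegular (maximalIdeal A) ys M) (hP : P ∈ associatedPrimes A
      (powerTorsion (maximalIdeal A) (TopCohomology ys M) →ₗ[A] E)) :
    maximalIdeal A ≤ (P ⊔ Ideal.ofList ys).radical := by
  rw [Ideal.radical_eq_sInf]
  refine le_sInf fun q ⟨hle, hq⟩ => ?_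
  refine (hE.dual_powerTorsion_topCohomology hys h).2 ⟨q, hq⟩ ?_ (le_sup_right.trans hle)
  have := (hE.dual_powerTorsion_topCohomology hys h).1
  rw [Module.support_eq_zeroLocus]
  exact (Submodule.annihilator_top.ge.trans hP.annihilator_le).trans (le_sup_left.trans hle)

lemma IsResidueDualizing.exists_elementaryEquiv_forall_associatedPrimes
    (hE : IsResidueDualizing A E) (hys : ∀ y ∈ ys, y ∈ maximalIdeal A)
    (h : FilterRegular (maximalIdeal A) ys M) (x : A) :
    ∃ z, ElementaryEquiv (ys ++ [x]) (ys ++ [z]) ∧ ∀ q ∈ associatedPrimes A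
      (powerTorsion (maximalIdeal A) (TopCohomology ys M) →ₗ[A] E), z ∈ q → q = maximalIdeal A := by
  have := (hE.dual_powerTorsion_topCohomology hys h).1
  have hfin := (associatedPrimes.finite A
    (powerTorsion (maximalIdeal A) (TopCohomology ys M) →ₗ[A] E)).subset
      (Set.sdiff_subset (t := {maximalIdeal A}))
  have hprime : ∀ q ∈ hfin.toFinset, q.IsPrime := fun q hq => (hfin.mem_toFinset.1 hq).1.isPrime
  obtain ⟨a, ha, hav⟩ := exists_mem_add_notMem_of_isPrime x (Ideal.ofList ys) hfin.toFinset hprime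
    fun q hq _ hle => (hfin.mem_toFinset.1 hq).2 <|
      (le_maximalIdeal (hprime q hq).ne_top).antisymm <|
      (hE.maximalIdeal_le_radical_of_mem_associatedPrimes hys h (hfin.mem_toFinset.1 hq).1).trans
        ((hprime q hq).radical_le_iff.2 (sup_le le_rfl hle))
  refine ⟨x + a, ?_, fun q hq hz => ?_⟩
  · exact (ElementaryEquiv.perm (List.perm_append_singleton x ys)).trans
      ((ElementaryEquiv.add x ha).trans (.perm (List.perm_append_singleton (x + a) ys).symm))
  · by_contra hne
    exact hav q (hfin.mem_toFinset.2 ⟨hq, hne⟩) hz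

end

namespace IsParameterList

/-- Grothendieck's nonvanishing theorem for the top local cohomology of `A ⧸ P`. If it vanished,
then `P'` would be an associated prime of the Matlis dual of the torsion of the previous Čech
cohomology module, for a prime `P'` containing `P` and the last parameter `z`. This forces
`P' = m` for a suitable choice of the parameters, so that `z` is the only one, but `A ⧸ P` has no
torsion. -/
theorem nontrivial_topCohomology [IsPrecomplete (maximalIdeal A) A] (h : IsParameterList P xs)
    (hP : P.IsPrime) : Nontrivial (TopCohomology xs (A ⧸ P)) := by
  induction hn : xs.length generalizing P xs with
  | zero =>
    obtain rfl := List.length_eq_zero_iff.1 hn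
    exact Ideal.Quotient.nontrivial_iff.2 hP.ne_top
  | succ n ih =>
    obtain ⟨xs, x, rfl⟩ := (xs.eq_nil_or_concat').resolve_left (by rintro rfl; simp at hn)
    obtain ⟨E, _, _, hE⟩ := exists_isResidueDualizing A
    obtain ⟨ys, e, hreg⟩ := exists_elementaryEquiv_filterRegular (M := A ⧸ P)
      Ideal.annihilator_quotient.ge xs x h.le_radical
    have hys := (List.forall_mem_append.1 (h.of_elementaryEquiv e).mem).1
    obtain ⟨z, e', hz⟩ := hE.exists_elementaryEquiv_forall_associatedPrimes hys hreg x
    replace h := h.of_elementaryEquiv (e.trans e')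
    by_contra hT
    have : Subsingleton (CechQuotient z (TopCohomology ys (A ⧸ P))) := by
      rw [not_nontrivial_iff_subsingleton, ← Module.annihilator_eq_top_iff (R := A),
        (e.trans e').annihilator_topCohomology_eq, Module.annihilator_eq_top_iff] at hT
      exact @Equiv.subsingleton _ _ (TopCohomology.concatEquiv z ys).symm.toEquiv hT
    obtain ⟨P', hP', hPP', hzP', h'⟩ := h.exists_isPrime_of_concat
    have := ih h' hP' (by simpa [hn] using (e.trans e').length_eq.symm)
    obtain ⟨ρ, hρ⟩ := h.exists_surjective_powerTorsion hPP' hzP'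
    obtain rfl := hz P' (associatedPrimes_dual_subset_of_surjective hρ
      (h'.mem_associatedPrimes_dual hP' hE)) hzP'
    obtain rfl := h'.eq_nil_of_maximalIdeal
    have hPm : ¬ maximalIdeal A ≤ P := fun hle => List.cons_ne_nil z []
      ((le_maximalIdeal hP.ne_top).antisymm hle ▸ h).eq_nil_of_maximalIdeal
    have hΓ : powerTorsion (maximalIdeal A) (TopCohomology ([] : List A) (A ⧸ P)) = ⊥ :=
      powerTorsion_quotient_eq_bot hP hPm
    have := Submodule.subsingleton_iff_eq_bot.2 hΓ
    exact not_subsingleton _ hρ.subsingleton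

end IsParameterList

end Nonvanishing

section MaximalCoheight

variable {A : Type u} [CommRing A]

/-- Since `c` kills the cohomology of `M` and `c` factors as `M → N → M`, the map induced by
`N → M` is zero and the connecting map is onto. -/
lemma TopCohomology.exists_surjective_of_mem_annihilator {I : Ideal A} {ys : List A} {z c : A}
    {N M B : Type u} [AddCommGroup N] [Module A N] [AddCommGroup M] [Module A M] [AddCommGroup B]
    [Module A B] {f : N →ₗ[A] M} {g : M →ₗ[A] B} {p : M →ₗ[A] N} (h : Function.Exact f g)
    (hg : Function.Surjective g) (hf : Function.Injective f) (hp : Function.Surjective p)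
    (hfp : f ∘ₗ p = c • LinearMap.id) (hB : FilterRegular I ys B) (hz : z ∈ I)
    (hc : c ∈ Module.annihilator A (TopCohomology (ys ++ [z]) M)) :
    ∃ δ : powerTorsion (Ideal.span {z}) (TopCohomology ys B) →ₗ[A] TopCohomology (ys ++ [z]) N,
      Function.Surjective δ := by
  have hker : LinearMap.ker (map ys f) ≤ powerTorsion (Ideal.span {z}) (TopCohomology ys N) :=
    (ker_map_le_powerTorsion h hg ((LinearMap.ker_eq_bot.2 hf).trans_le bot_le) hB).trans
      (powerTorsion_anti (((Ideal.span_singleton_le_iff_mem _).2 hz).trans Ideal.le_radical))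
  obtain ⟨δ, hδ⟩ := CechQuotient.exists_exact_map (map_exact ys h hg) (map_surjective ys hg) hker
  have hzero : CechQuotient.map z (map ys f) = 0 := by
    refine (LinearMap.cancel_right (CechQuotient.map_surjective (map_surjective ys hp))).1 ?_
    rw [← CechQuotient.map_comp, ← map_comp, hfp, map_smul_id, CechQuotient.map_smul_id,
      LinearMap.zero_comp]
    rw [(concatEquiv z ys).annihilator_eq] at hc
    exact LinearMap.ext (Module.mem_annihilator.1 hc)
  have hδs : Function.Surjective δ := fun l => (hδ l).1 (LinearMap.congr_fun hzero l)
  exact ⟨(concatEquiv z ys).symm.toLinearMap ∘ₗ δ, (concatEquiv z ys).symm.surjective.comp hδs⟩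

/-- The dual of `T ys (A ⧸ c)` has `P` as an associated prime, whereas finiteness of this dual
bounds the dimension at its associated primes by the length of `ys`. -/
theorem IsParameterList.notMem_annihilator_topCohomology [IsNoetherianRing A] [IsLocalRing A]
    [IsPrecomplete (maximalIdeal A) A] {c : A} {xs : List A} (hP : (Ideal.torsionOf A A c).IsPrime)
    (h : IsParameterList (Ideal.torsionOf A A c) xs)
    (hm : maximalIdeal A ≤ (Ideal.ofList xs).radical) :
    c ∉ Module.annihilator A (TopCohomology xs A) := by
  intro hc
  obtain rfl | ⟨xs, x, rfl⟩ := xs.eq_nil_or_concat'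
  · have hc : c • (1 : A) = 0 := Module.mem_annihilator.1 hc (1 : A)
    rw [smul_eq_mul, mul_one] at hc
    exact hP.ne_top (by rw [hc, Ideal.torsionOf_zero])
  obtain ⟨E, _, _, hE⟩ := exists_isResidueDualizing A
  obtain ⟨ys, e, hreg⟩ := exists_elementaryEquiv_filterRegular (M := A ⧸ Ideal.span {c}) bot_le xs x
    (hm.trans (Ideal.radical_mono le_sup_right))
  replace h := h.of_elementaryEquiv e
  rw [e.ofList_eq] at hm
  rw [e.annihilator_topCohomology_eq] at hc
  obtain ⟨hys, hx⟩ := List.forall_mem_append.1 h.mem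
  replace hx := hx x (List.mem_singleton_self x)
  let f : (A ⧸ Ideal.torsionOf A A c) →ₗ[A] A :=
    (Ideal.torsionOf A A c).liftQ (LinearMap.toSpanSingleton A A c) le_rfl
  have hexact : Function.Exact f (Submodule.mkQ (Ideal.span {c})) := by
    rw [LinearMap.exact_iff, Submodule.ker_mkQ, Ideal.span, LinearMap.span_singleton_eq_range A A c]
    exact (Submodule.range_liftQ _ _ _).symm
  obtain ⟨δ, hδ⟩ := TopCohomology.exists_surjective_of_mem_annihilator hexact
    (Submodule.mkQ_surjective _) (LinearMap.ker_eq_bot.1 (Submodule.ker_liftQ_eq_bot' _ _ rfl))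
    (Submodule.mkQ_surjective _) (LinearMap.ext fun a => mul_comm a c) hreg hx hc
  have := h.nontrivial_topCohomology hP
  have hass := associatedPrimes_dual_subset_of_surjective hδ (h.mem_associatedPrimes_dual hP hE)
  rw [TopCohomology.powerTorsion_span_singleton_eq_maximalIdeal (I := ⊥) bot_le hx
    (hm.trans (Ideal.radical_mono le_sup_right))] at hass
  have hdim := ringKrullDim_quotient_le_length hys
    (hE.maximalIdeal_le_radical_of_mem_associatedPrimes hys hreg hass)
  rw [h.ringKrullDim_eq, List.length_append, List.length_singleton] at hdim
  exact absurd hdim (by norm_cast; omega)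

end MaximalCoheight

section Chevalley

variable {A : Type u} [CommRing A]

lemma isArtinianRing_quotient_maximalIdeal_pow [IsLocalRing A] [IsNoetherianRing A] (k : ℕ) :
    IsArtinianRing (A ⧸ maximalIdeal A ^ k) := by
  obtain rfl | hk := eq_or_ne k 0
  · have : Subsingleton (A ⧸ maximalIdeal A ^ 0) :=
      Ideal.Quotient.subsingleton_iff.2 ((pow_zero _).trans Ideal.one_eq_top)
    infer_instance
  · exact quotient_artinian_of_mem_minimalPrimes_of_isLocalRing _
      ⟨⟨inferInstance, Ideal.pow_le_self hk⟩, fun q hq _ => hq.1.le_of_pow_le hq.2⟩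

lemma exists_le_iInf_sup_pow [IsLocalRing A] [IsNoetherianRing A] {J : ℕ → Ideal A}
    (hJ : Antitone J) (k : ℕ) : ∃ s, J s ≤ ⨅ n, J n ⊔ maximalIdeal A ^ k := by
  have := isArtinianRing_quotient_maximalIdeal_pow (A := A) k
  let π := Ideal.Quotient.mk (maximalIdeal A ^ k)
  let f : ℕ →o (Ideal (A ⧸ maximalIdeal A ^ k))ᵒᵈ :=
    ⟨fun n => OrderDual.toDual ((J n).map π), fun _ _ h => Ideal.map_mono (hJ h)⟩
  obtain ⟨s, hs⟩ := IsArtinian.monotone_stabilizes f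
  refine ⟨s, le_iInf fun n => ?_⟩
  have hmap : (J s).map π = (J (max s n)).map π := hs (max s n) (le_max_left _ _)
  calc J s ≤ ((J s).map π).comap π := Ideal.le_comap_map
    _ = J (max s n) ⊔ maximalIdeal A ^ k := by
      rw [hmap, Ideal.comap_map_of_surjective' _ Ideal.Quotient.mk_surjective, Ideal.mk_ker]
    _ ≤ J n ⊔ maximalIdeal A ^ k := sup_le_sup_right (hJ (le_max_right _ _)) _

/-- An element of the left-hand side is refined successively to a Cauchy sequence whose `j`-th
term lies in every `J n ⊔ I ^ (k + j)`. -/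
lemma iInf_sup_pow_le_iInf_sup (I : Ideal A) [IsPrecomplete I A] {J : ℕ → Ideal A}
    (hJ : ∀ j, ∃ s, J s ≤ ⨅ n, J n ⊔ I ^ j) (k : ℕ) :
    ⨅ n, J n ⊔ I ^ k ≤ (⨅ n, ⨅ j, J n ⊔ I ^ j) ⊔ I ^ k := by
  intro a ha
  have hrefine (j : ℕ) (b : A) (hb : b ∈ ⨅ n, J n ⊔ I ^ j) :
      ∃ c ∈ ⨅ n, J n ⊔ I ^ (j + 1), b - c ∈ I ^ j := by
    obtain ⟨s, hs⟩ := hJ (j + 1)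
    obtain ⟨c, hc, d, hd, rfl⟩ := Submodule.mem_sup.1 ((Submodule.mem_iInf _).1 hb s)
    exact ⟨c, hs hc, by rwa [add_sub_cancel_left]⟩
  choose! φ hφ hsub using hrefine
  let b : ℕ → A := Nat.rec a fun j => φ (k + j)
  have hb (j : ℕ) : b j ∈ ⨅ n, J n ⊔ I ^ (k + j) := by
    induction j with
    | zero => exact ha
    | succ j ih => exact hφ (k + j) (b j) ih
  have hsucc (j : ℕ) : b j - b (j + 1) ∈ I ^ (k + j) := hsub (k + j) (b j) (hb j)
  have hstart (j : ℕ) : a - b j ∈ I ^ k := by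
    induction j with
    | zero => exact (sub_self a).symm ▸ zero_mem _
    | succ j ih =>
      have := add_mem ih (Ideal.pow_le_pow_right (Nat.le_add_right k j) (hsucc j))
      rwa [sub_add_sub_cancel] at this
  have hcauchy : AdicCompletion.IsAdicCauchy I A b :=
    (AdicCompletion.isAdicCauchy_iff I A b).2 fun j => by
    rw [SModEq.sub_mem, smul_eq_mul, Ideal.mul_top]
    exact Ideal.pow_le_pow_right (Nat.le_add_left j k) (hsucc j)
  obtain ⟨l, hl⟩ := IsPrecomplete.prec inferInstance hcauchy
  simp only [SModEq.sub_mem, smul_eq_mul, Ideal.mul_top] at hl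
  refine Submodule.mem_sup.2 ⟨l, ?_, a - l, ?_, add_sub_cancel _ _⟩
  · refine (Submodule.mem_iInf _).2 fun n => (Submodule.mem_iInf _).2 fun j => ?_
    have hbj := sup_le_sup_left (Ideal.pow_le_pow_right (Nat.le_add_left j k)) (J n)
      ((Submodule.mem_iInf _).1 (hb j) n)
    have := sub_mem hbj (Ideal.mem_sup_right (hl j))
    rwa [sub_sub_cancel] at this
  · have := add_mem (hstart k) (hl k)
    rwa [sub_add_sub_cancel] at this

/-- **Chevalley's theorem**. -/
theorem exists_le_maximalIdeal_pow_of_iInf_eq_bot [IsLocalRing A] [IsNoetherianRing A]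
    [IsPrecomplete (maximalIdeal A) A] {J : ℕ → Ideal A} (hJ : Antitone J)
    (hopen : ∀ n, ∃ e, maximalIdeal A ^ e ≤ J n) (hbot : ⨅ n, J n = ⊥) (k : ℕ) :
    ∃ n, J n ≤ maximalIdeal A ^ k := by
  have hclosed : ⨅ n, ⨅ j, J n ⊔ maximalIdeal A ^ j ≤ ⨅ n, J n := by
    refine iInf_mono fun n => ?_
    obtain ⟨e, he⟩ := hopen n
    exact (iInf_le _ e).trans (sup_le le_rfl he)
  obtain ⟨s, hs⟩ := exists_le_iInf_sup_pow hJ k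
  refine ⟨s, hs.trans ((iInf_sup_pow_le_iInf_sup _ (exists_le_iInf_sup_pow hJ) k).trans ?_)⟩
  exact sup_le (hclosed.trans (hbot.trans_le bot_le)) le_rfl

end Chevalley

section LimIdeal

variable {A : Type u} [CommRing A]

/-- The limit closure of `x₁ ^ n, …, x_r ^ n` in `A`, as the ideal of those `a` for which the
fraction `a / (x₁ ⋯ x_r) ^ n` vanishes in the top local cohomology of `A`. -/
noncomputable def limIdeal (xs : List A) (n : ℕ) : Ideal A :=
  LinearMap.ker (TopCohomology.frac xs n : A →ₗ[A] TopCohomology xs A)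

lemma mem_limIdeal {xs : List A} {n : ℕ} {a : A} :
    a ∈ limIdeal xs n ↔ ∃ k, xs.prod ^ k * a ∈ powersIdeal xs (n + k) := by
  refine (TopCohomology.frac_eq_zero_iff xs n a).trans (exists_congr fun k => ?_)
  rw [smul_eq_mul, Ideal.mul_top, smul_eq_mul]

lemma limIdeal_antitone (xs : List A) : Antitone (limIdeal xs) := by
  refine antitone_nat_of_succ_le fun n a ha => ?_
  rw [limIdeal, LinearMap.mem_ker] at ha ⊢
  rw [← TopCohomology.frac_add xs n 1, map_smul, ha, smul_zero]

lemma exists_maximalIdeal_pow_le_limIdeal [IsLocalRing A] [IsNoetherianRing A] {xs : List A}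
    (hm : maximalIdeal A ≤ (Ideal.ofList xs).radical) (n : ℕ) :
    ∃ e, maximalIdeal A ^ e ≤ limIdeal xs n := by
  have hrad : Ideal.ofList xs ≤ (powersIdeal xs n).radical :=
    Ideal.span_le.2 fun x hx => ⟨n, pow_mem_powersIdeal hx n⟩
  obtain ⟨e, he⟩ := Ideal.exists_pow_le_of_le_radical_of_fg
    (hm.trans (Ideal.radical_le_radical_iff.2 hrad)) (IsNoetherian.noetherian _)
  refine ⟨e, he.trans fun a ha => TopCohomology.powersIdeal_smul_le_ker_frac xs n ?_⟩
  rwa [smul_eq_mul, Ideal.mul_top]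

lemma iInf_limIdeal (xs : List A) :
    ⨅ n, limIdeal xs n = Module.annihilator A (TopCohomology xs A) := by
  ext c
  rw [Submodule.mem_iInf, TopCohomology.mem_annihilator_iff]
  refine forall_congr' fun n => ⟨fun h a => ?_, fun h => ?_⟩
  · rw [smul_eq_mul, mul_comm, ← smul_eq_mul, map_smul, LinearMap.mem_ker.1 h, smul_zero]
  · rw [limIdeal, LinearMap.mem_ker, ← mul_one c]
    exact h 1

variable [IsLocalRing A] [IsNoetherianRing A] {xs : List A}

lemma iInf_limIdeal_eq_bot [IsPrecomplete (maximalIdeal A) A] (hxs : ∀ x ∈ xs, x ∈ maximalIdeal A)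
    (hm : maximalIdeal A ≤ (Ideal.ofList xs).radical)
    (hdim : ∀ P ∈ associatedPrimes A A, ringKrullDim (A ⧸ P) = xs.length) :
    ⨅ n, limIdeal xs n = ⊥ := by
  rw [iInf_limIdeal]
  by_contra hne
  have := (Submodule.nontrivial_iff_ne_bot).2 hne
  obtain ⟨P, hP⟩ := associatedPrimes.nonempty A (Module.annihilator A (TopCohomology xs A))
  obtain ⟨hprime, ⟨c, hc⟩, rfl⟩ := mem_associatedPrimes_iff_eq_torsionOf.1 hP
  have htor : Ideal.torsionOf A (Module.annihilator A (TopCohomology xs A)) ⟨c, hc⟩ =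
      Ideal.torsionOf A A c :=
    Ideal.ext fun a => Subtype.ext_iff
  have hdimP := hdim _ (associatedPrimes.subset_of_injective (Submodule.injective_subtype _) hP)
  rw [htor] at hprime hdimP
  have hparam : IsParameterList (Ideal.torsionOf A A c) xs :=
    ⟨hxs, hm.trans (Ideal.radical_mono le_sup_right), hdimP⟩
  exact hparam.notMem_annihilator_topCohomology hprime hm hc

/-- Multiplication by `c` factors through `A ⧸ P`, whose cohomology vanishes. -/
lemma mem_limIdeal_of_ringKrullDim_torsionOf_lt (hxs : ∀ x ∈ xs, x ∈ maximalIdeal A)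
    (hm : maximalIdeal A ≤ (Ideal.ofList xs).radical) {c : A}
    (hdim : ringKrullDim (A ⧸ Ideal.torsionOf A A c) < xs.length) (n : ℕ) : c ∈ limIdeal xs n := by
  have : Subsingleton (TopCohomology xs (A ⧸ Ideal.torsionOf A A c)) :=
    TopCohomology.subsingleton_of_ringKrullDim_lt_length hdim hxs
      (hm.trans (Ideal.radical_mono le_sup_right))
  let f : (A ⧸ Ideal.torsionOf A A c) →ₗ[A] A :=
    (Ideal.torsionOf A A c).liftQ (LinearMap.toSpanSingleton A A c) le_rfl
  have hfactor : f ∘ₗ Submodule.mkQ _ = c • LinearMap.id := LinearMap.ext fun a => mul_comm a c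
  have hzero : c • (LinearMap.id : TopCohomology xs A →ₗ[A] TopCohomology xs A) = 0 := by
    rw [← TopCohomology.map_smul_id, ← hfactor, TopCohomology.map_comp]
    ext u
    rw [LinearMap.comp_apply, Subsingleton.elim (TopCohomology.map xs _ u) 0, map_zero]
    rfl
  refine iInf_le (limIdeal xs) n ?_
  rw [iInf_limIdeal]
  exact Module.mem_annihilator.2 (LinearMap.congr_fun hzero)

end LimIdeal

section FaithfullyFlat

lemma ringKrullDim_le_of_faithfullyFlat (A B : Type*) [CommRing A] [CommRing B] [Algebra A B]
    [Module.FaithfullyFlat A B] : ringKrullDim A ≤ ringKrullDim B := by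
  refine iSup_le fun l => ?_
  obtain ⟨P, hP⟩ := PrimeSpectrum.comap_surjective_of_faithfullyFlat (A := A) (B := B) l.last
  have : P.asIdeal.LiesOver l.last.asIdeal := ⟨congrArg PrimeSpectrum.asIdeal hP.symm⟩
  obtain ⟨L, hL, -⟩ := Ideal.exists_ltSeries_of_hasGoingDown (S := B) l P.asIdeal
  exact hL ▸ Order.LTSeries.length_le_krullDim L

lemma map_powersIdeal {A B : Type*} [CommRing A] [CommRing B] (φ : A →+* B) (xs : List A) (k : ℕ) :
    (powersIdeal xs k).map φ = powersIdeal (xs.map φ) k := by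
  simp only [powersIdeal, Ideal.map_ofList, List.map_map, Function.comp_def, map_pow]

lemma comap_limIdeal_of_faithfullyFlat {A B : Type u} [CommRing A] [CommRing B] [Algebra A B]
    [Module.FaithfullyFlat A B] (xs : List A) (n : ℕ) :
    (limIdeal (xs.map (algebraMap A B)) n).comap (algebraMap A B) = limIdeal xs n := by
  ext a
  rw [Ideal.mem_comap, mem_limIdeal, mem_limIdeal]
  refine exists_congr fun k => ?_
  rw [← map_powersIdeal, ← map_list_prod, ← map_pow, ← map_mul, ← Ideal.mem_comap,
    Ideal.comap_map_eq_self_of_faithfullyFlat]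

end FaithfullyFlat

section Completion

lemma exists_ringHom_adicCompletion {S B : Type*} [CommRing S] [CommRing B] {J : Ideal S}
    {K : Ideal B} [IsAdicComplete K B] (f : S →+* B) (h : J.map f ≤ K) :
    ∃ F : AdicCompletion J S →+* B, F.comp (algebraMap S (AdicCompletion J S)) = f := by
  have hpow (n : ℕ) : J ^ n ≤ (K ^ n).comap f := by
    rw [← Ideal.map_le_iff_le_comap, Ideal.map_pow]
    exact Ideal.pow_right_mono h n
  let g (n : ℕ) : AdicCompletion J S →+* B ⧸ K ^ n :=
    (Ideal.quotientMap (K ^ n) f (hpow n)).comp (AdicCompletion.evalₐ J n).toRingHom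
  have hg_mk (n : ℕ) (a : AdicCompletion.AdicCauchySequence J S) :
      g n (AdicCompletion.mk J S a) = Ideal.Quotient.mk (K ^ n) (f (a n)) :=
    congrArg (Ideal.quotientMap (K ^ n) f (hpow n)) (AdicCompletion.evalₐ_mk J n a)
  have hg {m n : ℕ} (hmn : m ≤ n) : (Ideal.Quotient.factorPow K hmn).comp (g n) = g m := by
    refine RingHom.ext fun a => ?_
    induction a using AdicCompletion.induction_on with
    | _ a =>
      rw [RingHom.comp_apply, hg_mk, hg_mk]
      exact congrArg (Ideal.quotientMap (K ^ m) f (hpow m)) (AdicCompletion.Ideal.mk_eq_mk J hmn a)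
  refine ⟨IsAdicComplete.liftRingHom K g hg, DFunLike.coe_injective ?_⟩
  exact IsHausdorff.funext' K fun n s => IsAdicComplete.mk_liftRingHom K g hg n _

/-- Sending the variables to generators of `K` exhibits `B` as a quotient of a power series ring
over `R`, viewed as the completion of a polynomial ring. -/
theorem isNoetherianRing_of_isAdicComplete (R : Type*) {B : Type*} [CommRing R] [CommRing B]
    [IsNoetherianRing R] [Algebra R B] {K : Ideal B} [IsAdicComplete K B] (hK : K.FG)
    (hR : Function.Surjective (algebraMap R (B ⧸ K))) : IsNoetherianRing B := by
  obtain ⟨n, s, hs⟩ := Submodule.fg_iff_exists_fin_generating_family.1 hK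
  let S := MvPolynomial (Fin n) R
  let J : Ideal S := MvPolynomial.idealOfVars (Fin n) R
  let ev : S →+* B := (MvPolynomial.aeval s).toRingHom
  have hJ : J.map ev = K := by
    rw [Ideal.map_span, ← Set.range_comp, ← hs]
    exact congrArg (fun v => Ideal.span (Set.range v)) (funext (MvPolynomial.aeval_X s))
  obtain ⟨F, hF⟩ := exists_ringHom_adicCompletion ev hJ.le
  have hJF : (J.map (algebraMap S (AdicCompletion J S))).map F = K := by
    rw [Ideal.map_map, hF, hJ]
  have := AdicCompletion.isAdicComplete_self J (MvPolynomial.idealOfVars_fg _ _)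
  have : IsHausdorff ((J.map (algebraMap S (AdicCompletion J S))).map F) B :=
    hJF ▸ IsAdicComplete.toIsHausdorff
  have : IsNoetherianRing (AdicCompletion J S) :=
    isNoetherianRing_of_ringEquiv _ (MvPowerSeries.toAdicCompletionAlgEquiv (Fin n) R).toRingEquiv
  refine isNoetherianRing_of_surjective _ _ F (surjective_of_mk_map_comp_surjective
    (I := J.map (algebraMap S (AdicCompletion J S))) F ?_)
  rw [hJF]
  intro b
  obtain ⟨r, rfl⟩ := hR b
  refine ⟨algebraMap S (AdicCompletion J S) (MvPolynomial.C r), congrArg (Ideal.Quotient.mk K) ?_⟩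
  exact (RingHom.congr_fun hF _).trans (MvPolynomial.aeval_C s r)

variable {R : Type u} [CommRing R] [IsNoetherianRing R] [IsLocalRing R]

instance isNoetherianRing_adicCompletion :
    IsNoetherianRing (AdicCompletion (maximalIdeal R) R) := by
  refine isNoetherianRing_of_isAdicComplete R (K := maximalIdeal _) ?_ ?_
  · rw [AdicCompletion.maximalIdeal_eq_map]
    exact Ideal.FG.map (IsNoetherian.noetherian _) _
  · exact (AdicCompletion.residueField_map_bijective R).surjective.comp
      Ideal.Quotient.mk_surjective

lemma exists_sub_algebraMap_mem_maximalIdeal_pow (a : AdicCompletion (maximalIdeal R) R) (n : ℕ) :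
    ∃ r : R, a - algebraMap R (AdicCompletion (maximalIdeal R) R) r ∈
      maximalIdeal (AdicCompletion (maximalIdeal R) R) ^ n := by
  obtain ⟨r, hr⟩ := Submodule.Quotient.mk_surjective _ (a.val n)
  refine ⟨r, ?_⟩
  rw [AdicCompletion.maximalIdeal_eq_map, ← Ideal.map_pow, ← Submodule.restrictScalars_mem R,
    ← Ideal.smul_top_eq_map, AdicCompletion.pow_smul_top_eq_ker_eval (IsNoetherian.noetherian _),
    LinearMap.mem_ker, map_sub, sub_eq_zero]
  exact hr.symm

instance faithfullyFlat_adicCompletion :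
    Module.FaithfullyFlat R (AdicCompletion (maximalIdeal R) R) :=
  Module.FaithfullyFlat.of_flat_of_isLocalHom

end Completion

section LimitClosure

variable {A : Type u} [CommRing A]

lemma powersIdeal_ofFn {r : ℕ} (x : Fin r → A) (k : ℕ) :
    powersIdeal (List.ofFn x) k = Ideal.span (Set.range fun i => x i ^ k) := by
  rw [powersIdeal, List.map_ofFn, Ideal.ofList]
  exact congrArg Ideal.span (Set.ext fun a => List.mem_ofFn' _ a)

lemma powersIdeal_map_pow (xs : List A) (n k : ℕ) :
    powersIdeal (xs.map (· ^ n)) k = powersIdeal xs (n * k) := by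
  simp only [powersIdeal, List.map_map, Function.comp_def, pow_mul]

lemma prod_pow_mul_mem_powersIdeal_of_le {xs : List A} {a : A} {n k l : ℕ} (hkl : k ≤ l)
    (h : xs.prod ^ k * a ∈ powersIdeal xs (n + k)) : xs.prod ^ l * a ∈ powersIdeal xs (n + l) := by
  obtain ⟨d, rfl⟩ := Nat.exists_eq_add_of_le hkl
  have := prod_pow_smul_mem_powersIdeal_smul (M := A)
    (by rwa [smul_eq_mul, Ideal.mul_top]) d
  rwa [smul_eq_mul, smul_eq_mul, Ideal.mul_top, ← mul_assoc, ← pow_add, add_comm d,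
    add_assoc] at this

lemma limIdeal_map_pow (xs : List A) {n : ℕ} (hn : n ≠ 0) :
    limIdeal (xs.map (· ^ n)) 1 = limIdeal xs n := by
  have key (a : A) (k : ℕ) : (xs.map (· ^ n)).prod ^ k * a ∈ powersIdeal (xs.map (· ^ n)) (1 + k) ↔
      xs.prod ^ (n * k) * a ∈ powersIdeal xs (n + n * k) := by
    have hprod : (xs.map (· ^ n)).prod = xs.prod ^ n := List.prod_hom xs (powMonoidHom n)
    rw [hprod, ← pow_mul, powersIdeal_map_pow, mul_add, mul_one]
  ext a
  rw [mem_limIdeal, mem_limIdeal]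
  simp only [key]
  exact ⟨fun ⟨k, hk⟩ => ⟨n * k, hk⟩, fun ⟨k, hk⟩ => ⟨k,
    prod_pow_mul_mem_powersIdeal_of_le (Nat.le_mul_of_pos_left k (Nat.pos_of_ne_zero hn)) hk⟩⟩

lemma limitClosure_eq_limIdeal {r : ℕ} (x : Fin r → A) :
    limitClosure (M := A) x = limIdeal (List.ofFn x) 1 := by
  have key (a : A) (k : ℕ) :
      a ∈ (Ideal.span (Set.range fun i => x i ^ (k + 2)) • (⊤ : Submodule A A)).comap
        (LinearMap.lsmul A A ((∏ i, x i) ^ (k + 1))) ↔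
      (List.ofFn x).prod ^ (k + 1) * a ∈ powersIdeal (List.ofFn x) (1 + (k + 1)) := by
    rw [← powersIdeal_ofFn, smul_eq_mul, Ideal.mul_top, List.prod_ofFn, add_comm 1]
    rfl
  refine le_antisymm (iSup_le fun k a ha => mem_limIdeal.2 ⟨k + 1, (key a k).1 ha⟩) fun a ha => ?_
  obtain ⟨k, hk⟩ := mem_limIdeal.1 ha
  exact Submodule.mem_iSup_of_mem k
    ((key a k).2 (prod_pow_mul_mem_powersIdeal_of_le k.le_succ hk))

lemma limitClosure_pow_eq_limIdeal {r : ℕ} (x : Fin r → A) {n : ℕ} (hn : n ≠ 0) :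
    limitClosure (M := A) (fun i => x i ^ n) = limIdeal (List.ofFn x) n := by
  rw [limitClosure_eq_limIdeal, ← limIdeal_map_pow _ hn, List.map_ofFn]
  rfl

end LimitClosure

section SystemOfParameters

lemma IsSOP.isParameterList {R : Type*} [CommRing R] [IsLocalRing R] {t : ℕ} {x : Fin t → R}
    (hx : IsSOP R x) (hdim : ringKrullDim R = t) :
    IsParameterList (⊥ : Ideal R) (List.ofFn x) where
  mem := (List.forall_mem_ofFn_iff).2 hx.1
  le_radical := by
    have : Ideal.ofList (List.ofFn x) = Ideal.span (Set.range x) :=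
      congrArg Ideal.span (Set.ext fun a => List.mem_ofFn' x a)
    rw [bot_sup_eq, this, hx.2]
  ringKrullDim_eq := by
    rw [ringKrullDim_eq_of_ringEquiv (RingEquiv.quotientBot R), hdim, List.length_ofFn]

namespace IsParameterList

section Complete

variable {A : Type u} [CommRing A] [IsLocalRing A] {xs : List A}

lemma le_radical_ofList (h : IsParameterList (⊥ : Ideal A) xs) :
    maximalIdeal A ≤ (Ideal.ofList xs).radical := by
  simpa only [bot_sup_eq] using h.le_radical

lemma ringKrullDim_eq_length (h : IsParameterList (⊥ : Ideal A) xs) :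
    ringKrullDim A = xs.length :=
  (ringKrullDim_eq_of_ringEquiv (RingEquiv.quotientBot A)).symm.trans h.ringKrullDim_eq

variable [IsNoetherianRing A]

lemma exists_limIdeal_le_of_forall_associatedPrimes [IsPrecomplete (maximalIdeal A) A]
    (h : IsParameterList (⊥ : Ideal A) xs)
    (hdim : ∀ P ∈ associatedPrimes A A, ringKrullDim (A ⧸ P) = ringKrullDim A) (k : ℕ) :
    ∃ n, limIdeal xs n ≤ maximalIdeal A ^ k := by
  exact exists_le_maximalIdeal_pow_of_iInf_eq_bot (limIdeal_antitone xs)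
    (exists_maximalIdeal_pow_le_limIdeal h.le_radical_ofList)
    (iInf_limIdeal_eq_bot h.mem h.le_radical_ofList fun P hP =>
      (hdim P hP).trans h.ringKrullDim_eq_length) k

lemma ringKrullDim_quotient_eq_of_mem_associatedPrimes
    (h : IsParameterList (⊥ : Ideal A) xs) (hlim : ∀ k, ∃ n, limIdeal xs n ≤ maximalIdeal A ^ k)
    {P : Ideal A} (hP : P ∈ associatedPrimes A A) : ringKrullDim (A ⧸ P) = ringKrullDim A := by
  obtain ⟨hprime, c, rfl⟩ := mem_associatedPrimes_iff_eq_torsionOf.1 hP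
  refine (ringKrullDim_quotient_le _).eq_of_not_lt fun hlt => hprime.ne_top ?_
  suffices hc : c ∈ (⊥ : Ideal A) by rw [(Submodule.mem_bot A).1 hc, Ideal.torsionOf_zero]
  rw [← Ideal.iInf_pow_eq_bot_of_isLocalRing _ (maximalIdeal.isMaximal A).ne_top,
    Submodule.mem_iInf]
  intro k
  obtain ⟨n, hn⟩ := hlim k
  exact hn (mem_limIdeal_of_ringKrullDim_torsionOf_lt h.mem h.le_radical_ofList
    (hlt.trans_eq h.ringKrullDim_eq_length) n)

end Complete

end IsParameterList

end SystemOfParameters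

section AdicCompletion

variable {R : Type u} [CommRing R] [IsNoetherianRing R] [IsLocalRing R]

local notation "R̂" => AdicCompletion (maximalIdeal R) R

lemma le_maximalIdeal_pow_iff_comap_le {J : Ideal R̂} (hJ : ∃ e, maximalIdeal R̂ ^ e ≤ J) (k : ℕ) :
    J ≤ maximalIdeal R̂ ^ k ↔ J.comap (algebraMap R R̂) ≤ maximalIdeal R ^ k := by
  have hmap : maximalIdeal R̂ ^ k = (maximalIdeal R ^ k).map (algebraMap R R̂) := by
    rw [AdicCompletion.maximalIdeal_eq_map, Ideal.map_pow]
  obtain ⟨e, he⟩ := hJ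
  refine ⟨fun h => ?_, fun h c hc => ?_⟩
  · rw [← Ideal.comap_map_eq_self_of_faithfullyFlat (B := R̂) (maximalIdeal R ^ k), ← hmap]
    exact Ideal.comap_mono h
  · obtain ⟨r, hr⟩ := exists_sub_algebraMap_mem_maximalIdeal_pow c (max e k)
    have hrJ : algebraMap R R̂ r ∈ J :=
      (Submodule.sub_mem_iff_right _ hc).1 (he (Ideal.pow_le_pow_right (le_max_left e k) hr))
    have hrk : algebraMap R R̂ r ∈ maximalIdeal R̂ ^ k :=
      hmap ▸ Ideal.mem_map_of_mem _ (h (Ideal.mem_comap.2 hrJ))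
    exact (Submodule.sub_mem_iff_left _ hrk).1 (Ideal.pow_le_pow_right (le_max_right e k) hr)

namespace IsParameterList

variable {xs : List R}

lemma map_adicCompletion (h : IsParameterList (⊥ : Ideal R) xs) :
    IsParameterList (⊥ : Ideal R̂) (xs.map (algebraMap R R̂)) := by
  have hmem : ∀ y ∈ xs.map (algebraMap R R̂), y ∈ maximalIdeal R̂ := by
    rw [List.forall_mem_map, AdicCompletion.maximalIdeal_eq_map]
    exact fun x hx => Ideal.mem_map_of_mem _ (h.mem x hx)
  have hrad : maximalIdeal R̂ ≤ (⊥ ⊔ Ideal.ofList (xs.map (algebraMap R R̂))).radical := by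
    rw [AdicCompletion.maximalIdeal_eq_map, bot_sup_eq, ← Ideal.map_ofList]
    refine (Ideal.map_mono h.le_radical).trans ?_
    rw [bot_sup_eq]
    exact Ideal.map_radical_le _
  refine ⟨hmem, hrad, (ringKrullDim_quotient_le_length hmem hrad).antisymm ?_⟩
  rw [List.length_map, ← h.ringKrullDim_eq_length,
    ringKrullDim_eq_of_ringEquiv (RingEquiv.quotientBot R̂)]
  exact ringKrullDim_le_of_faithfullyFlat R R̂

lemma isUnmixedLocalRing_iff (h : IsParameterList (⊥ : Ideal R) xs) :
    IsUnmixedLocalRing R ↔ ∀ k, ∃ n, limIdeal xs n ≤ maximalIdeal R ^ k := by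
  have hcompl := h.map_adicCompletion
  have hopen := exists_maximalIdeal_pow_le_limIdeal hcompl.le_radical_ofList
  have hiff (n k : ℕ) : limIdeal (xs.map (algebraMap R R̂)) n ≤ maximalIdeal R̂ ^ k ↔
      limIdeal xs n ≤ maximalIdeal R ^ k := by
    rw [le_maximalIdeal_pow_iff_comap_le (hopen n), comap_limIdeal_of_faithfullyFlat]
  simp only [← hiff]
  exact ⟨hcompl.exists_limIdeal_le_of_forall_associatedPrimes,
    fun hlim P hP => hcompl.ringKrullDim_quotient_eq_of_mem_associatedPrimes hlim hP⟩

end IsParameterList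

end AdicCompletion

/-- **Theorem D**: a Noetherian local ring `(R, m)` of dimension `t` is unmixed if and only
if, for any system of parameters `x = x₁, …, x_t`, the `m`-adic topology coincides with the
topology defined by the family `{(x₁^n, …, x_t^n)^lim}_{n ≥ 1}`; since the `m`-adic topology
is always finer, this says: for every `k` there is `n ≥ 1` with
`(x₁^n, …, x_t^n)^lim ⊆ m^k`. -/
theorem unmixed_iff_limitClosure_topology_eq_adic
    {R : Type*} [CommRing R] [IsNoetherianRing R] [IsLocalRing R]
    {t : ℕ} (hdim : ringKrullDim R = t)
    (x : Fin t → R) (hx : IsSOP R x) :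
    IsUnmixedLocalRing R ↔
      ∀ k : ℕ, ∃ n : ℕ,
        limitClosure (M := R) (fun i => x i ^ (n + 1)) ≤ maximalIdeal R ^ k := by
  rw [(hx.isParameterList hdim).isUnmixedLocalRing_iff]
  refine forall_congr' fun k => ⟨fun ⟨n, hn⟩ => ⟨n, ?_⟩, fun ⟨n, hn⟩ => ⟨n + 1, ?_⟩⟩
  · rw [limitClosure_pow_eq_limIdeal x n.succ_ne_zero]
    exact (limIdeal_antitone _ n.le_succ).trans hn
  · rwa [← limitClosure_pow_eq_limIdeal x n.succ_ne_zero]
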